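/- arXiv:2504.03898 — 2 statements merged into one kernel-verified Lean document; each statement's English description precedes it below -/
import Mathlib

section
/- For every n ≥ 1 and every 0 ≤ k ≤ n, ψ_{n,k} + ψ_{n,n−k} = B_{n,k}. Equivalently, Ψ_{C_n}(t) + tⁿ·Ψ_{C_n}(t⁻¹) = E_{B_n}(t), where E_{B_n}(t) := Σ_k B_{n,k} t^k is the type B Eulerian polynomial. -/
/-!
The map `w ↦ -w` exchanges `X_n` with its complement in the hyperoctahedral group and sends `des_B`
to `n - des_B`. Hence the claim amounts to: `basc` and `des_B` are equidistributed on `X_n`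
(`sum_basc_eq_sum_desB`).

Both statistics count the gaps `0, …, n` of the window `w_1 ⋯ w_n` satisfying some condition (`gap`,
`gstat`), and both grow in the same way along the generating tree of signed permutations.
Every element of `X_{n+1}` arises uniquely from some `w ∈ X_n` by inserting `±(n+1)` into one of the
`n+1` gaps (`ins`, `mem_Xs`). Such an insertion keeps the statistic if the gap is counted in `w`,
and also for exactly one exceptional (gap, sign) pair whose gap is not counted in `w`; every other
insertion raises it by one (`step_des`, `step_basc`). The exceptional pair is
* for `des_B`: inserting `n+1` at the right end;
* for `basc`: inserting `n+1` right after `n`, or `-(n+1)` right before `-n`, whichever of `±n`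
  occurs in the window.

So a `w ∈ X_n` with statistic `s` has `2s+1` children with statistic `s` and `2(n+1) - (2s+1)`
children with statistic `s+1`, for either statistic (`sum_children`), and induction on `n` gives
the equidistribution.
-/

open scoped Classical

/-- A signed permutation of length `n`: a permutation `w` of `ℤ` with
`w(-i) = -w(i)` that fixes every integer of absolute value greater than `n`. -/
def IsSignedPerm (n : ℕ) (w : Equiv.Perm ℤ) : Prop :=
  (∀ i : ℤ, w (-i) = - w i) ∧ ∀ i : ℤ, (n : ℤ) < |i| → w i = i

/-- Membership in `X_n := {w ∈ 𝔅_n : w⁻¹(1) > 0}`. -/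
def InXn (n : ℕ) (w : Equiv.Perm ℤ) : Prop :=
  IsSignedPerm n w ∧ 0 < w.symm 1

/-- The type B descent number `des_B(w) = #{i ∈ {0,…,n-1} : w_i > w_{i+1}}`,
with the convention `w_0 = 0` (automatic, since a signed permutation fixes `0`). -/
noncomputable def desB (n : ℕ) (w : Equiv.Perm ℤ) : ℕ :=
  ((Finset.range n).filter fun i => w ((i : ℤ) + 1) < w (i : ℤ)).card

/-- The flag-excedance `fexc(w) = 2·#{i : w_i > i} + #{i : w_i < 0}`. -/
noncomputable def fexc (n : ℕ) (w : Equiv.Perm ℤ) : ℕ :=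
  2 * ((Finset.Icc (1 : ℤ) (n : ℤ)).filter fun i => i < w i).card
    + ((Finset.Icc (1 : ℤ) (n : ℤ)).filter fun i => w i < 0).card

/-- The cyclic successor on `{-n,…,-1,1,…,n}` (with `(-1)⁺ = 1` and `n⁺ = -n`). -/
def csucc (n : ℕ) (i : ℤ) : ℤ :=
  if i = -1 then 1 else if i = (n : ℤ) then -(n : ℤ) else i + 1

/-- The circular descent set `CDes(w) = {i ∈ {-n,…,-1,1,…,n} : w(i) > w(i⁺)}`. -/
noncomputable def cdesSet (n : ℕ) (w : Equiv.Perm ℤ) : Finset ℤ :=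
  (Finset.Icc (-(n : ℤ)) (n : ℤ)).filter fun i => i ≠ 0 ∧ w (csucc n i) < w i

/-- The circular descent number `cdes(w) = |CDes(w)|`. -/
noncomputable def cdes (n : ℕ) (w : Equiv.Perm ℤ) : ℕ := (cdesSet n w).card

/-- `a ≪ b`: there is a nonzero integer strictly between `a` and `b`. -/
def Lll (a b : ℤ) : Prop := ∃ c : ℤ, c ≠ 0 ∧ a < c ∧ c < b

/-- The big ascent number `basc(w) = |BAsc(w)|`, where `BAsc(w) ⊆ {-1,1,…,n}`:
`-1 ∈ BAsc(w)` iff `w_1 ≥ 2`; for `1 ≤ i ≤ n-1`, `i ∈ BAsc(w)` iff `w_i ≪ w_{i+1}`;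
and `n ∈ BAsc(w)` iff `w_n ≤ -2`. -/
noncomputable def basc (n : ℕ) (w : Equiv.Perm ℤ) : ℕ :=
  ((insert (-1 : ℤ) (Finset.Icc (1 : ℤ) (n : ℤ))).filter fun i =>
    if i = -1 then 2 ≤ w 1
    else if i = (n : ℤ) then w (n : ℤ) ≤ -2
    else Lll (w i) (w (i + 1))).card

/-- `L'_{n,k}(r)`: the number of half-integer points in the `r`-th dilate of the
half-open type C hypersimplex `Δ'_{C_n,k}`, in the `y`-coordinates. -/
noncomputable def Lp (n k r : ℕ) : ℕ :=
  if k = 1 then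
    Set.ncard {y : Fin n → ℤ |
      (∀ j, 0 ≤ y j ∧ y j ≤ 2 * (r : ℤ)) ∧ (∀ j : Fin n, (j : ℕ) = 0 → y j ≤ (r : ℤ)) ∧
      0 ≤ ∑ j, y j ∧ ∑ j, y j ≤ (r : ℤ)}
  else
    Set.ncard {y : Fin n → ℤ |
      (∀ j, 0 ≤ y j ∧ y j ≤ 2 * (r : ℤ)) ∧ (∀ j : Fin n, (j : ℕ) = 0 → y j ≤ (r : ℤ)) ∧
      ((k : ℤ) - 1) * r < ∑ j, y j ∧ ∑ j, y j ≤ (k : ℤ) * r}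

/-- `L_{n,k}(r)`: the number of half-integer points in the `r`-th dilate of the
closed type C hypersimplex `Δ_{C_n,k}`, in the `y`-coordinates. -/
noncomputable def Lc (n k r : ℕ) : ℕ :=
  Set.ncard {y : Fin n → ℤ |
    (∀ j, 0 ≤ y j ∧ y j ≤ 2 * (r : ℤ)) ∧ (∀ j : Fin n, (j : ℕ) = 0 → y j ≤ (r : ℤ)) ∧
    ((k : ℤ) - 1) * r ≤ ∑ j, y j ∧ ∑ j, y j ≤ (k : ℤ) * r}

/-- `ψ_{n,k} = #{w ∈ X_n : basc(w) = k}`. -/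
noncomputable def psiN (n k : ℕ) : ℕ :=
  {w : Equiv.Perm ℤ | InXn n w ∧ basc n w = k}.ncard

/-- `ψ_{n,k}` with an integer index (`0` for negative `k`). -/
noncomputable def psiZ (n : ℕ) (k : ℤ) : ℕ :=
  {w : Equiv.Perm ℤ | InXn n w ∧ (basc n w : ℤ) = k}.ncard

/-- `Ψ_{C_n}(t) = Σ_k ψ_{n,k} t^k ∈ ℤ[t]`. -/
noncomputable def PsiC (n : ℕ) : Polynomial ℤ :=
  ∑ᶠ k : ℕ, (psiN n k : Polynomial ℤ) * Polynomial.X ^ k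

/-- `Ψ_{C_n}(t)` with rational coefficients. -/
noncomputable def PsiCQ (n : ℕ) : Polynomial ℚ :=
  ∑ᶠ k : ℕ, (psiN n k : Polynomial ℚ) * Polynomial.X ^ k

/-- The descent number of a permutation of `{1,…,m}`. -/
noncomputable def desA (m : ℕ) (σ : Equiv.Perm (Fin m)) : ℕ :=
  (Finset.univ.filter fun i : Fin m =>
    ∃ h : (i : ℕ) + 1 < m, σ ⟨(i : ℕ) + 1, h⟩ < σ i).card

/-- The classical (type A) Eulerian polynomial `E_m^A(t) = Σ_{σ ∈ S_m} t^{des σ}`. -/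
noncomputable def EulerianA (m : ℕ) : Polynomial ℚ :=
  ∑ σ : Equiv.Perm (Fin m), Polynomial.X ^ desA m σ

/-- The relation `u ⇀ w` on `X_n`. -/
def covRel (n : ℕ) (u w : Equiv.Perm ℤ) : Prop :=
  InXn n u ∧ InXn n w ∧
    ((2 ≤ w 1 ∧ u = w * Equiv.swap (1 : ℤ) (-1)) ∨
     (∃ i : ℤ, 1 ≤ i ∧ i ≤ (n : ℤ) - 1 ∧ Lll (w i) (w (i + 1)) ∧
        u = w * (Equiv.swap i (i + 1) * Equiv.swap (-i) (-(i + 1)))) ∨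
     (w (n : ℤ) ≤ -2 ∧ u = w * Equiv.swap (n : ℤ) (-(n : ℤ))))

/-- The `i`-th coordinate (`1 ≤ i ≤ n`) of the vertex `v^j(w)` (`1 ≤ j ≤ n+1`):
`v^{n+1}_i(w) = #({1,…,i-1} ∩ CDes(w⁻¹))` and `v^j = v^{j+1} + ½ e_{w_j}`. -/
noncomputable def vcoord (n : ℕ) (w : Equiv.Perm ℤ) (j : ℕ) (i : ℕ) : ℚ :=
  ((Finset.Icc (1 : ℤ) ((i : ℤ) - 1) ∩ cdesSet n w.symm).card : ℚ)
    + (1 / 2) * ∑ m ∈ Finset.Icc (j : ℤ) (n : ℤ),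
        (if w m = (i : ℤ) then (1 : ℚ) else if w m = -(i : ℤ) then -1 else 0)

/-- `u` is the image `τ_n(w)`: in window notation `u = 1 w'_1 ⋯ w'_n`, where
`w'_i = w_i + 1` if `w_i > 0` and `w'_i = w_i - 1` if `w_i < 0`. -/
def isTau (n : ℕ) (w u : Equiv.Perm ℤ) : Prop :=
  u 1 = 1 ∧ ∀ i : ℤ, 1 ≤ i → i ≤ (n : ℤ) →
    u (i + 1) = if 0 < w i then w i + 1 else w i - 1

/-! ### Inserting `±(n+1)` into a window -/

/-- The underlying function of `ins`. -/
def insFun (n j : ℕ) (s : Bool) (i : ℤ) : ℤ :=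
  if i = (j : ℤ) + 1 then (if s then (n : ℤ) + 1 else -((n : ℤ) + 1))
  else if i = -((j : ℤ) + 1) then (if s then -((n : ℤ) + 1) else (n : ℤ) + 1)
  else if (j : ℤ) + 1 < i ∧ i ≤ n + 1 then i - 1
  else if -((n : ℤ) + 1) ≤ i ∧ i < -((j : ℤ) + 1) then i + 1 else i

/-- The inverse of `insFun`. -/
def insInv (n j : ℕ) (s : Bool) (i : ℤ) : ℤ :=
  if i = (if s then (n : ℤ) + 1 else -((n : ℤ) + 1)) then (j : ℤ) + 1
  else if i = (if s then -((n : ℤ) + 1) else (n : ℤ) + 1) then -((j : ℤ) + 1)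
  else if (j : ℤ) + 1 ≤ i ∧ i < n + 1 then i + 1
  else if -((n : ℤ) + 1) < i ∧ i ≤ -((j : ℤ) + 1) then i - 1 else i

/-- The signed permutation with window `1 ⋯ j x (j+1) ⋯ n`, where `x = n+1` if `s = true` and
`x = -(n+1)` otherwise. Right multiplication by it inserts `x` into gap `j` of a window of
length `n`. -/
def ins (n : ℕ) (j : Fin (n + 1)) (s : Bool) : Equiv.Perm ℤ where
  toFun := insFun n j s
  invFun := insInv n j s
  left_inv i := by
    have := j.2
    generalize hk : insFun n j s i = k
    unfold insFun at hk
    unfold insInv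
    cases s <;> simp only [if_true, Bool.false_eq_true, if_false] at hk ⊢ <;>
      split_ifs at hk ⊢ <;> omega
  right_inv i := by
    have := j.2
    generalize hk : insInv n j s i = k
    unfold insInv at hk
    unfold insFun
    cases s <;> simp only [if_true, Bool.false_eq_true, if_false] at hk ⊢ <;>
      split_ifs at hk ⊢ <;> omega

lemma ins_apply (n : ℕ) (j : Fin (n + 1)) (s : Bool) (i : ℤ) : ins n j s i =
    if i = (j : ℤ) + 1 then (if s then (n : ℤ) + 1 else -((n : ℤ) + 1))
    else if i = -((j : ℤ) + 1) then (if s then -((n : ℤ) + 1) else (n : ℤ) + 1)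
    else if (j : ℤ) + 1 < i ∧ i ≤ n + 1 then i - 1
    else if -((n : ℤ) + 1) ≤ i ∧ i < -((j : ℤ) + 1) then i + 1 else i := rfl

lemma ins_symm_apply (n : ℕ) (j : Fin (n + 1)) (s : Bool) (i : ℤ) : (ins n j s).symm i =
    if i = (if s then (n : ℤ) + 1 else -((n : ℤ) + 1)) then (j : ℤ) + 1
    else if i = (if s then -((n : ℤ) + 1) else (n : ℤ) + 1) then -((j : ℤ) + 1)
    else if (j : ℤ) + 1 ≤ i ∧ i < n + 1 then i + 1
    else if -((n : ℤ) + 1) < i ∧ i ≤ -((j : ℤ) + 1) then i - 1 else i := rfl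

lemma ins_neg (n : ℕ) (j : Fin (n + 1)) (s : Bool) (i : ℤ) :
    ins n j s (-i) = - ins n j s i := by
  have := j.2
  rw [ins_apply, ins_apply]
  cases s <;> simp only [if_true, Bool.false_eq_true, if_false] <;> grind

lemma ins_symm_neg (n : ℕ) (j : Fin (n + 1)) (s : Bool) (i : ℤ) :
    (ins n j s).symm (-i) = - (ins n j s).symm i := by
  rw [Equiv.symm_apply_eq, ins_neg, Equiv.apply_symm_apply]

lemma IsSignedPerm.zero {n : ℕ} {w : Equiv.Perm ℤ} (h : IsSignedPerm n w) : w 0 = 0 := by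
  have := h.1 0
  simp only [neg_zero] at this
  omega

lemma IsSignedPerm.top {n : ℕ} {w : Equiv.Perm ℤ} (h : IsSignedPerm n w) :
    w ((n : ℤ) + 1) = n + 1 := h.2 _ (by rw [abs_of_nonneg (by omega)]; omega)

/-- A signed permutation preserves the interval `[-n, n]`. -/
lemma IsSignedPerm.bound {n : ℕ} {w : Equiv.Perm ℤ} (h : IsSignedPerm n w) {i : ℤ}
    (h1 : -(n : ℤ) ≤ i) (h2 : i ≤ n) : -(n : ℤ) ≤ w i ∧ w i ≤ n := by
  by_contra hc
  have h3 : (n : ℤ) < |w i| := by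
    rw [lt_abs]; omega
  have h4 := w.injective (h.2 _ h3)
  omega

lemma IsSignedPerm.symm_bound {n : ℕ} {w : Equiv.Perm ℤ} (h : IsSignedPerm n w) {i : ℤ}
    (h1 : -(n : ℤ) ≤ i) (h2 : i ≤ n) : -(n : ℤ) ≤ w.symm i ∧ w.symm i ≤ n := by
  by_contra hc
  have h3 : (n : ℤ) < |w.symm i| := by
    rw [lt_abs]; omega
  have h4 := h.2 _ h3
  rw [Equiv.apply_symm_apply] at h4
  omega

lemma isSignedPerm_mul_ins {n : ℕ} {w : Equiv.Perm ℤ} (h : IsSignedPerm n w) (j : Fin (n + 1))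
    (s : Bool) : IsSignedPerm (n + 1) (w * ins n j s) := by
  refine ⟨fun i => ?_, fun i hi => ?_⟩
  · rw [Equiv.Perm.mul_apply, Equiv.Perm.mul_apply, ins_neg, h.1]
  · have h1 : ins n j s i = i := by
      have := j.2
      rw [lt_abs] at hi
      rw [ins_apply]
      push_cast at hi
      grind
    rw [Equiv.Perm.mul_apply, h1]
    exact h.2 i (by push_cast at hi; omega)

lemma inXn_mul_ins {n : ℕ} (hn : 1 ≤ n) {w : Equiv.Perm ℤ} (h : InXn n w) (j : Fin (n + 1))
    (s : Bool) : InXn (n + 1) (w * ins n j s) := by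
  refine ⟨isSignedPerm_mul_ins h.1 j s, ?_⟩
  have h1 := h.1.symm_bound (i := 1) (by omega) (by omega)
  have h2 := h.2
  change 0 < (ins n j s).symm (w.symm 1)
  rw [ins_symm_apply]
  cases s <;> simp only [if_true, Bool.false_eq_true, if_false] <;> grind

/-- Removing `±(n+1)` from the window of an element of `X_{n+1}` leaves an element of `X_n`. -/
lemma exists_ins {n : ℕ} (hn : 1 ≤ n) {u : Equiv.Perm ℤ} (h : InXn (n + 1) u) :
    ∃ (w : Equiv.Perm ℤ) (j : Fin (n + 1)) (s : Bool), InXn n w ∧ w * ins n j s = u := by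
  have hb := h.1.symm_bound (i := (n : ℤ) + 1) (by push_cast; omega) (by push_cast; omega)
  have hq0 : u.symm ((n : ℤ) + 1) ≠ 0 := by
    intro h0
    rw [Equiv.symm_apply_eq, h.1.zero] at h0
    omega
  push_cast at hb
  obtain ⟨j, s, hjs⟩ : ∃ (j : Fin (n + 1)) (s : Bool),
      (ins n j s).symm ((n : ℤ) + 1) = u.symm ((n : ℤ) + 1) := by
    rcases lt_or_gt_of_ne hq0 with hq | hq
    · refine ⟨⟨(-u.symm ((n : ℤ) + 1) - 1).toNat, by omega⟩, false, ?_⟩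
      rw [ins_symm_apply]
      simp only [Bool.false_eq_true, if_false]
      grind
    · refine ⟨⟨(u.symm ((n : ℤ) + 1) - 1).toNat, by omega⟩, true, ?_⟩
      rw [ins_symm_apply]
      simp only [if_true]
      grind
  have htop : u ((ins n j s).symm ((n : ℤ) + 1)) = n + 1 := by
    rw [hjs, Equiv.apply_symm_apply]
  have hodd : ∀ i : ℤ, (u * (ins n j s)⁻¹) (-i) = -(u * (ins n j s)⁻¹) i := fun i => by
    change u ((ins n j s).symm (-i)) = - u ((ins n j s).symm i)
    rw [ins_symm_neg, h.1.1]
  refine ⟨u * (ins n j s)⁻¹, j, s, ⟨⟨hodd, ?_⟩, ?_⟩, by simp⟩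
  · have hpos : ∀ i : ℤ, (n : ℤ) < i → (u * (ins n j s)⁻¹) i = i := fun i hi => by
      change u ((ins n j s).symm i) = i
      rcases eq_or_ne i ((n : ℤ) + 1) with rfl | hne
      · exact htop
      · have h1 : (ins n j s).symm i = i := by
          have := j.2
          rw [ins_symm_apply]
          cases s <;> simp only [if_true, Bool.false_eq_true, if_false] <;> grind
        rw [h1]
        exact h.1.2 i (by rw [lt_abs]; push_cast; omega)
    intro i hi
    rw [lt_abs] at hi
    rcases hi with hi | hi
    · exact hpos i hi
    · have := hpos (-i) hi
      rw [hodd] at this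
      omega
  · change 0 < ins n j s (u.symm 1)
    have h2 := h.2
    have hj := j.2
    have h3 : u (u.symm 1) = 1 := Equiv.apply_symm_apply _ _
    -- position `j + 1` of `u` carries `±(n+1)`, which differs from `1` because `1 ≤ n`
    have hne : u.symm 1 ≠ (j : ℤ) + 1 := by
      intro he
      rw [he] at h3
      rw [ins_symm_apply] at htop
      cases s
      · have : u (-((j : ℤ) + 1)) = n + 1 := by
          convert htop using 2
          simp only [Bool.false_eq_true, if_false]
          grind
        rw [h.1.1] at this
        omega
      · have : u ((j : ℤ) + 1) = n + 1 := by
          convert htop using 2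
          simp
        omega
    rw [ins_apply]
    cases s <;> simp only [if_true, Bool.false_eq_true, if_false] <;> grind

lemma ins_inj {n : ℕ} {w₁ w₂ : Equiv.Perm ℤ} (h₁ : IsSignedPerm n w₁) (h₂ : IsSignedPerm n w₂)
    {j₁ j₂ : Fin (n + 1)} {s₁ s₂ : Bool} (h : w₁ * ins n j₁ s₁ = w₂ * ins n j₂ s₂) :
    w₁ = w₂ ∧ j₁ = j₂ ∧ s₁ = s₂ := by
  have key : ∀ (w : Equiv.Perm ℤ), IsSignedPerm n w → ∀ (j : Fin (n + 1)) (s : Bool),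
      (w * ins n j s).symm (n + 1) = if s then (j : ℤ) + 1 else -((j : ℤ) + 1) := by
    intro w hw j s
    change (ins n j s).symm (w.symm (n + 1)) = _
    have : w.symm ((n : ℤ) + 1) = n + 1 := by rw [Equiv.symm_apply_eq, hw.top]
    rw [this, ins_symm_apply]
    cases s <;> grind
  have e₁ := key w₁ h₁ j₁ s₁
  rw [h, key w₂ h₂ j₂ s₂] at e₁
  have hjs : j₁ = j₂ ∧ s₁ = s₂ := by
    rw [Fin.ext_iff]
    cases s₁ <;> cases s₂ <;> simp at e₁ ⊢ <;> omega
  obtain ⟨rfl, rfl⟩ := hjs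
  exact ⟨mul_right_cancel h, rfl, rfl⟩

/-- `Xs m` is `X_{m+1}` as a finite set, built by successive insertions from the window `1`. -/
noncomputable def Xs : ℕ → Finset (Equiv.Perm ℤ)
  | 0 => {1}
  | m + 1 => (Xs m ×ˢ (Finset.univ : Finset (Fin (m + 1 + 1) × Bool))).image
      fun q => q.1 * ins (m + 1) q.2.1 q.2.2

lemma inXn_one {w : Equiv.Perm ℤ} : InXn 1 w ↔ w = 1 := by
  constructor
  · intro h
    have hb := h.1.symm_bound (i := 1) (by simp) (by simp)
    have h2 := h.2
    have h3 : w.symm 1 = 1 := by push_cast at hb; omega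
    have h4 : w 1 = 1 := by rw [Equiv.symm_apply_eq] at h3; exact h3.symm
    ext i
    change w i = i
    by_cases hi : ((1 : ℕ) : ℤ) < |i|
    · exact h.1.2 i hi
    · rw [lt_abs] at hi
      push_cast at hi
      have : i = 0 ∨ i = 1 ∨ i = -1 := by omega
      rcases this with rfl | rfl | rfl
      · exact h.1.zero
      · exact h4
      · rw [h.1.1, h4]
  · rintro rfl
    exact ⟨⟨fun _ => rfl, fun _ _ => rfl⟩, by change (0 : ℤ) < 1; omega⟩

lemma mem_Xs (m : ℕ) (w : Equiv.Perm ℤ) : w ∈ Xs m ↔ InXn (m + 1) w := by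
  induction m generalizing w with
  | zero => rw [zero_add, inXn_one]; simp [Xs]
  | succ m ih =>
    simp only [Xs, Finset.mem_image, Finset.mem_product, Finset.mem_univ, and_true, Prod.exists]
    constructor
    · rintro ⟨v, j, s, hv, rfl⟩
      exact inXn_mul_ins (by omega) ((ih v).1 hv) j s
    · intro h
      obtain ⟨v, j, s, hv, he⟩ := exists_ins (by omega) h
      exact ⟨v, j, s, (ih v).2 hv, he⟩

lemma sum_Xs_succ (m : ℕ) (f : Equiv.Perm ℤ → ℕ) :
    ∑ u ∈ Xs (m + 1), f u =
      ∑ w ∈ Xs m, ∑ q : Fin (m + 1 + 1) × Bool, f (w * ins (m + 1) q.1 q.2) := by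
  rw [Xs, Finset.sum_image, Finset.sum_product]
  rintro ⟨w₁, j₁, s₁⟩ h₁ ⟨w₂, j₂, s₂⟩ h₂ h
  simp only [Finset.coe_product, Set.mem_prod, Finset.mem_coe, mem_Xs] at h₁ h₂
  obtain ⟨rfl, rfl, rfl⟩ := ins_inj h₁.1.1 h₂.1.1 h
  rfl

/-! ### Gap statistics -/

/-- The condition at gap `j ∈ {0, …, n}` of the window of `w`: `A` tests the first entry (gap `0`),
`Z` the last entry (gap `n`), and `P` two consecutive entries (interior gaps). -/
def gap (A Z : ℤ → Prop) (P : ℤ → ℤ → Prop) (n : ℕ) (w : Equiv.Perm ℤ) (j : ℕ) : Prop :=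
  if j = 0 then A (w 1) else if j = n then Z (w n) else P (w j) (w (j + 1))

/-- The number of gaps of the window of `w` satisfying the condition `gap`. -/
noncomputable def gstat (A Z : ℤ → Prop) (P : ℤ → ℤ → Prop) (n : ℕ) (w : Equiv.Perm ℤ) : ℕ :=
  ∑ j ∈ Finset.range (n + 1), if gap A Z P n w j then 1 else 0

/-- The hypothesis on the effect of inserting `±(n+1)` into a window `w` of length `n`: the two gaps
created by the insertion contribute `1` in total, except for a single (gap, sign) pair `e`, for
which they contribute `0`; moreover the gap of `e` is not counted in `w`. -/
def Step (A Z : ℤ → Prop) (P : ℤ → ℤ → Prop) (n : ℕ) (w : Equiv.Perm ℤ) : Prop :=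
  ∃ e : Fin (n + 1) × Bool, ¬ gap A Z P n w e.1 ∧ ∀ q : Fin (n + 1) × Bool,
    ((if gap A Z P (n + 1) (w * ins n q.1 q.2) q.1 then 1 else 0)
      + (if gap A Z P (n + 1) (w * ins n q.1 q.2) (q.1 + 1) then 1 else 0) : ℕ)
      = if q = e then 0 else 1

lemma mul_ins_lt {n : ℕ} (w : Equiv.Perm ℤ) (j : Fin (n + 1)) (s : Bool) {i : ℤ} (h0 : 0 ≤ i)
    (hi : i ≤ j) : (w * ins n j s) i = w i := by
  rw [Equiv.Perm.mul_apply, ins_apply]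
  congr 1
  grind

lemma mul_ins_gt {n : ℕ} (w : Equiv.Perm ℤ) (j : Fin (n + 1)) (s : Bool) {i : ℤ} (h0 : (j : ℤ) < i)
    (hi : i ≤ n) : (w * ins n j s) (i + 1) = w i := by
  rw [Equiv.Perm.mul_apply, ins_apply]
  congr 1
  grind

lemma mul_ins_eq {n : ℕ} {w : Equiv.Perm ℤ} (hw : IsSignedPerm n w) (j : Fin (n + 1)) (s : Bool) :
    (w * ins n j s) ((j : ℤ) + 1) = if s then (n : ℤ) + 1 else -((n : ℤ) + 1) := by
  rw [Equiv.Perm.mul_apply, ins_apply, if_pos rfl]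
  cases s
  · simp only [Bool.false_eq_true, if_false]
    rw [hw.1, hw.top]
  · simp only [if_true]
    exact hw.top

/-- Inserting into gap `j` replaces that gap by the gaps `j` and `j+1` and leaves all others
unchanged. -/
lemma gstat_ins (A Z : ℤ → Prop) (P : ℤ → ℤ → Prop) {n : ℕ} (w : Equiv.Perm ℤ)
    (j : Fin (n + 1)) (s : Bool) :
    gstat A Z P (n + 1) (w * ins n j s) + (if gap A Z P n w j then 1 else 0)
      = gstat A Z P n w + ((if gap A Z P (n + 1) (w * ins n j s) j then 1 else 0)
        + (if gap A Z P (n + 1) (w * ins n j s) (j + 1) then 1 else 0)) := by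
  obtain ⟨j, hj⟩ := j
  obtain ⟨d, rfl⟩ : ∃ d, n = j + d := ⟨n - j, by omega⟩
  set u := w * ins (j + d) ⟨j, hj⟩ s with hu
  have h1 : ∀ i ∈ Finset.range j,
      (if gap A Z P (j + d + 1) u i then 1 else 0) = if gap A Z P (j + d) w i then 1 else 0 := by
    intro i hi
    rw [Finset.mem_range] at hi
    have : gap A Z P (j + d + 1) u i ↔ gap A Z P (j + d) w i := by
      unfold gap
      rcases Nat.eq_zero_or_pos i with rfl | hi0
      · rw [if_pos rfl, if_pos rfl, hu, mul_ins_lt _ _ _ (by omega) (by push_cast; omega)]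
      · rw [if_neg (by omega), if_neg (by omega), if_neg (by omega), if_neg (by omega), hu,
          mul_ins_lt _ _ _ (by omega) (by push_cast; omega),
          mul_ins_lt _ _ _ (by omega) (by push_cast; omega)]
    simp only [this]
  have h2 : ∀ i ∈ Finset.range d, (if gap A Z P (j + d + 1) u (j + 2 + i) then 1 else 0)
      = if gap A Z P (j + d) w (j + 1 + i) then 1 else 0 := by
    intro i hi
    rw [Finset.mem_range] at hi
    have : gap A Z P (j + d + 1) u (j + 2 + i) ↔ gap A Z P (j + d) w (j + 1 + i) := by
      unfold gap
      have c1 : ((j + d + 1 : ℕ) : ℤ) = ((j + d : ℕ) : ℤ) + 1 := by push_cast; ring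
      have c2 : ((j + 2 + i : ℕ) : ℤ) = ((j + 1 + i : ℕ) : ℤ) + 1 := by push_cast; ring
      rcases eq_or_ne (i + 1) d with rfl | hne
      · rw [if_neg (by omega), if_pos (by omega), if_neg (by omega), if_pos (by omega), c1, hu,
          mul_ins_gt _ _ _ (by push_cast; omega) (by push_cast; omega)]
      · rw [if_neg (by omega), if_neg (by omega), if_neg (by omega), if_neg (by omega), c2, hu,
          mul_ins_gt _ _ _ (by push_cast; omega) (by push_cast; omega),
          mul_ins_gt _ _ _ (by push_cast; omega) (by push_cast; omega)]
    simp only [this]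
  have e1 : gstat A Z P (j + d + 1) u =
      (∑ i ∈ Finset.range j, if gap A Z P (j + d) w i then 1 else 0)
      + (if gap A Z P (j + d + 1) u j then 1 else 0)
      + (if gap A Z P (j + d + 1) u (j + 1) then 1 else 0)
      + ∑ i ∈ Finset.range d, if gap A Z P (j + d) w (j + 1 + i) then 1 else 0 := by
    rw [gstat, show j + d + 1 + 1 = j + 1 + 1 + d by ring, Finset.sum_range_add,
      Finset.sum_range_succ, Finset.sum_range_succ,
      Finset.sum_congr rfl h1, Finset.sum_congr rfl h2]
  have e2 : gstat A Z P (j + d) w =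
      (∑ i ∈ Finset.range j, if gap A Z P (j + d) w i then 1 else 0)
      + (if gap A Z P (j + d) w j then 1 else 0)
      + ∑ i ∈ Finset.range d, if gap A Z P (j + d) w (j + 1 + i) then 1 else 0 := by
    rw [gstat, show j + d + 1 = j + 1 + d by ring, Finset.sum_range_add, Finset.sum_range_succ]
  simp only [e1, e2]
  ring

/-- The distribution of a gap statistic over the `2(n+1)` windows obtained by one insertion depends
only on `n` and on the value of the statistic before the insertion. -/
lemma sum_children (A Z : ℤ → Prop) (P : ℤ → ℤ → Prop) {n : ℕ} {w : Equiv.Perm ℤ}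
    (hstep : Step A Z P n w) (F : ℕ → ℕ) :
    ∑ q : Fin (n + 1) × Bool, F (gstat A Z P (n + 1) (w * ins n q.1 q.2))
      = (2 * gstat A Z P n w + 1) * F (gstat A Z P n w)
        + (2 * (n + 1) - (2 * gstat A Z P n w + 1)) * F (gstat A Z P n w + 1) := by
  obtain ⟨e, he, hq⟩ := hstep
  have hval : ∀ q : Fin (n + 1) × Bool, F (gstat A Z P (n + 1) (w * ins n q.1 q.2))
      = if gap A Z P n w q.1 ∨ q = e then F (gstat A Z P n w) else F (gstat A Z P n w + 1) := by
    intro q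
    have h1 := gstat_ins A Z P w q.1 q.2
    rw [hq q] at h1
    by_cases hg : gap A Z P n w q.1
    · have hne : q ≠ e := by rintro rfl; exact he hg
      rw [if_pos (Or.inl hg)]
      rw [if_pos hg, if_neg hne] at h1
      congr 1
      omega
    · rw [if_neg hg] at h1
      by_cases hqe : q = e
      · rw [if_pos (Or.inr hqe)]
        rw [if_pos hqe] at h1
        congr 1
      · rw [if_neg (by tauto)]
        rw [if_neg hqe] at h1
        congr 1
  have hcard : (Finset.univ.filter fun q : Fin (n + 1) × Bool =>
      gap A Z P n w q.1 ∨ q = e).card = 2 * gstat A Z P n w + 1 := by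
    rw [Finset.filter_or, Finset.card_union_of_disjoint, Finset.filter_eq',
      if_pos (Finset.mem_univ _), Finset.card_singleton]
    · congr 1
      rw [Finset.card_filter, Fintype.sum_prod_type, gstat,
        ← Fin.sum_univ_eq_sum_range (fun i => if gap A Z P n w i then 1 else 0), Finset.mul_sum]
      refine Finset.sum_congr rfl fun i _ => ?_
      rw [Fintype.sum_bool, two_mul]
    · rw [Finset.disjoint_filter]
      rintro q - hg rfl
      exact he hg
  have hcompl := Finset.card_filter_add_card_filter_not
    (s := (Finset.univ : Finset (Fin (n + 1) × Bool)))
    (p := fun q => gap A Z P n w q.1 ∨ q = e)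
  rw [hcard, Finset.card_univ, Fintype.card_prod, Fintype.card_fin, Fintype.card_bool] at hcompl
  rw [Finset.sum_congr rfl fun q _ => hval q, Finset.sum_ite, Finset.sum_const, Finset.sum_const,
    hcard, smul_eq_mul, smul_eq_mul]
  congr 2
  omega

/-- Two gap statistics that both behave as described by `Step` and agree on the window `1` are
equidistributed on `X_{m+1}`. -/
lemma equidistributed {A Z A' Z' : ℤ → Prop} {P P' : ℤ → ℤ → Prop}
    (h : ∀ n w, 1 ≤ n → IsSignedPerm n w → Step A Z P n w)
    (h' : ∀ n w, 1 ≤ n → IsSignedPerm n w → Step A' Z' P' n w)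
    (h0 : gstat A Z P 1 (1 : Equiv.Perm ℤ) = gstat A' Z' P' 1 (1 : Equiv.Perm ℤ))
    (m : ℕ) (F : ℕ → ℕ) :
    ∑ w ∈ Xs m, F (gstat A Z P (m + 1) w) = ∑ w ∈ Xs m, F (gstat A' Z' P' (m + 1) w) := by
  induction m generalizing F with
  | zero => simp only [Xs, Finset.sum_singleton, zero_add, h0]
  | succ m ih =>
    rw [sum_Xs_succ m fun w => F (gstat A Z P (m + 1 + 1) w),
      sum_Xs_succ m fun w => F (gstat A' Z' P' (m + 1 + 1) w)]
    have hw : ∀ w ∈ Xs m, IsSignedPerm (m + 1) w := fun w hw => ((mem_Xs m w).1 hw).1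
    rw [Finset.sum_congr rfl fun w hwm =>
        sum_children A Z P (h (m + 1) w (by omega) (hw w hwm)) F,
      Finset.sum_congr rfl fun w hwm =>
        sum_children A' Z' P' (h' (m + 1) w (by omega) (hw w hwm)) F]
    exact ih fun t => (2 * t + 1) * F t + (2 * (m + 1 + 1) - (2 * t + 1)) * F (t + 1)

/-! ### Descents and big ascents as gap statistics -/

/-- In `desB` the index set `range n` is coerced to a finset of integers through the monad structure
of `Finset`; here the count is indexed by natural numbers. -/
lemma desB_eq_card (n : ℕ) (w : Equiv.Perm ℤ) :
    desB n w = ((Finset.range n).filter fun i : ℕ => w ((i : ℤ) + 1) < w (i : ℤ)).card := by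
  rw [desB, ← Finset.card_image_of_injective _ (Nat.cast_injective (R := ℤ))]
  congr 1
  ext i
  simp only [Finset.bind_def, Finset.pure_def, Finset.mem_filter, Finset.mem_sup,
    Finset.mem_singleton, Finset.mem_image]
  constructor
  · rintro ⟨⟨a, ha, rfl⟩, h⟩
    exact ⟨a, ⟨ha, h⟩, rfl⟩
  · rintro ⟨a, ⟨ha, h⟩, rfl⟩
    exact ⟨⟨a, ha, rfl⟩, h⟩

lemma desB_eq_gstat {n : ℕ} (hn : 1 ≤ n) {w : Equiv.Perm ℤ} (hw : IsSignedPerm n w) :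
    desB n w = gstat (fun a => a < 0) (fun _ => False) (fun a b => b < a) n w := by
  rw [gstat, Finset.sum_range_succ, desB_eq_card, Finset.card_filter]
  have hlast : ¬ gap (fun a => a < 0) (fun _ => False) (fun a b => b < a) n w n := by
    unfold gap
    rw [if_neg (by omega), if_pos rfl]
    exact id
  rw [if_neg hlast, add_zero]
  refine Finset.sum_congr rfl fun i hi => ?_
  rw [Finset.mem_range] at hi
  have : gap (fun a => a < 0) (fun _ => False) (fun a b => b < a) n w i
      ↔ w ((i : ℤ) + 1) < w (i : ℤ) := by
    unfold gap
    rcases Nat.eq_zero_or_pos i with rfl | hi0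
    · rw [if_pos rfl]
      simp [hw.zero]
    · rw [if_neg (by omega), if_neg (by omega)]
  simp only [this]

lemma basc_eq_gstat {n : ℕ} (hn : 1 ≤ n) (w : Equiv.Perm ℤ) :
    basc n w = gstat (fun a => 2 ≤ a) (fun a => a ≤ -2) Lll n w := by
  rw [gstat, ← Finset.card_filter, basc]
  -- the index `-1` of `BAsc` corresponds to gap `0`, every other index to the gap of that number
  refine Finset.card_bij' (fun i _ => if i = -1 then 0 else i.toNat)
    (fun j _ => if j = 0 then -1 else (j : ℤ)) ?_ ?_ ?_ ?_
  · intro i hi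
    simp only [Finset.mem_filter, Finset.mem_insert, Finset.mem_Icc, Finset.mem_range] at hi ⊢
    obtain ⟨h1, h2⟩ := hi
    unfold gap
    rcases h1 with rfl | h1
    · simpa using h2
    · have hne : i ≠ -1 := by omega
      rw [if_neg hne] at h2 ⊢
      refine ⟨by omega, ?_⟩
      rw [if_neg (by omega)]
      have hc : ((i.toNat : ℕ) : ℤ) = i := by omega
      rcases eq_or_ne i (n : ℤ) with rfl | hin
      · rw [if_pos rfl] at h2
        rw [if_pos (by omega)]
        exact h2
      · rw [if_neg hin] at h2
        rw [if_neg (by omega), hc]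
        exact h2
  · intro j hj
    simp only [Finset.mem_filter, Finset.mem_insert, Finset.mem_Icc, Finset.mem_range] at hj ⊢
    obtain ⟨h1, h2⟩ := hj
    unfold gap at h2
    rcases Nat.eq_zero_or_pos j with rfl | hj0
    · simpa using h2
    · have hne : j ≠ 0 := by omega
      rw [if_neg hne] at h2 ⊢
      refine ⟨by omega, ?_⟩
      rw [if_neg (by omega)]
      rcases eq_or_ne j n with rfl | hin
      · rw [if_pos rfl] at h2
        rw [if_pos rfl]
        exact h2
      · rw [if_neg hin] at h2
        rw [if_neg (by omega)]
        exact h2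
  · intro i hi
    simp only [Finset.mem_filter, Finset.mem_insert, Finset.mem_Icc] at hi
    grind
  · intro j hj
    grind

lemma lll_top {n : ℕ} (hn : 1 ≤ n) {a : ℤ} (ha : a ≤ n) : Lll a ((n : ℤ) + 1) ↔ a ≠ n := by
  constructor
  · rintro ⟨c, -, h1, h2⟩
    omega
  · intro h
    exact ⟨n, by omega, by omega, by omega⟩

lemma lll_bot {n : ℕ} (hn : 1 ≤ n) {b : ℤ} (hb : -(n : ℤ) ≤ b) :
    Lll (-((n : ℤ) + 1)) b ↔ b ≠ -n := by
  constructor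
  · rintro ⟨c, -, h1, h2⟩
    omega
  · intro h
    exact ⟨-n, by omega, by omega, by omega⟩

lemma not_lll {a b : ℤ} (h : b ≤ a) : ¬ Lll a b := by
  rintro ⟨c, -, h1, h2⟩
  omega

/-- The gap to the left of an inserted entry. -/
lemma gap_left (A Z : ℤ → Prop) (P : ℤ → ℤ → Prop) {n : ℕ} {w : Equiv.Perm ℤ}
    (hw : IsSignedPerm n w) (j : Fin (n + 1)) (s : Bool) :
    gap A Z P (n + 1) (w * ins n j s) j ↔
      if (j : ℕ) = 0 then A (if s then (n : ℤ) + 1 else -((n : ℤ) + 1))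
      else P (w j) (if s then (n : ℤ) + 1 else -((n : ℤ) + 1)) := by
  have hx := mul_ins_eq hw j s
  have hj := j.2
  unfold gap
  by_cases h0 : (j : ℕ) = 0
  · rw [if_pos h0, if_pos h0]
    rw [h0] at hx
    simp only [Nat.cast_zero, zero_add] at hx
    rw [hx]
  · rw [if_neg h0, if_neg h0, if_neg (by omega), hx, mul_ins_lt _ _ _ (by omega) le_rfl]

/-- The gap to the right of an inserted entry. -/
lemma gap_right (A Z : ℤ → Prop) (P : ℤ → ℤ → Prop) {n : ℕ} {w : Equiv.Perm ℤ}
    (hw : IsSignedPerm n w) (j : Fin (n + 1)) (s : Bool) :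
    gap A Z P (n + 1) (w * ins n j s) (j + 1) ↔
      if (j : ℕ) = n then Z (if s then (n : ℤ) + 1 else -((n : ℤ) + 1))
      else P (if s then (n : ℤ) + 1 else -((n : ℤ) + 1)) (w (j + 1)) := by
  have hx := mul_ins_eq hw j s
  have hj := j.2
  unfold gap
  rw [if_neg (by omega)]
  by_cases h0 : (j : ℕ) = n
  · rw [if_pos h0, if_pos (by omega)]
    rw [h0] at hx
    rw [Nat.cast_add_one, hx]
  · rw [if_neg h0, if_neg (by omega)]
    rw [Nat.cast_add_one, hx, mul_ins_gt _ _ _ (by omega) (by omega)]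

lemma step_des {n : ℕ} {w : Equiv.Perm ℤ} (hn : 1 ≤ n) (hw : IsSignedPerm n w) :
    Step (fun a => a < 0) (fun _ => False) (fun a b => b < a) n w := by
  refine ⟨(⟨n, by omega⟩, true), ?_, ?_⟩
  · unfold gap
    rw [if_neg (by simp; omega), if_pos rfl]
    exact id
  · rintro ⟨⟨j, hj⟩, s⟩
    have b1 := hw.bound (i := j) (by omega) (by omega)
    rw [if_congr (gap_left _ _ _ hw _ _) rfl rfl, if_congr (gap_right _ _ _ hw _ _) rfl rfl]
    simp only [Prod.mk.injEq, Fin.mk.injEq]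
    by_cases hjn : j = n
    · cases s <;> simp [hjn] <;> grind
    · have b2 := hw.bound (i := (j : ℤ) + 1) (by omega) (by omega)
      cases s <;> simp [hjn] <;> grind

lemma step_basc {n : ℕ} {w : Equiv.Perm ℤ} (hn : 1 ≤ n) (hw : IsSignedPerm n w) :
    Step (fun a => 2 ≤ a) (fun a => a ≤ -2) Lll n w := by
  have hq := hw.symm_bound (i := n) (by omega) le_rfl
  have hwq : w (w.symm n) = n := Equiv.apply_symm_apply _ _
  have hq0 : w.symm n ≠ 0 := by
    intro h
    rw [h, hw.zero] at hwq
    omega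
  -- the exceptional pair sits right after `n`, or right before `-n`
  obtain ⟨e, he⟩ : ∃ e : Fin (n + 1) × Bool, ∀ q : Fin (n + 1) × Bool, q = e ↔
      if q.2 then w (q.1 : ℤ) = n else w ((q.1 : ℤ) + 1) = -n := by
    have hinv : ∀ i : ℤ, w i = n ↔ i = w.symm n := fun i => (Equiv.eq_symm_apply w).symm
    have hinv' : ∀ i : ℤ, w i = -n ↔ i = -w.symm n := fun i => by
      rw [← neg_eq_iff_eq_neg, ← hw.1, hinv, neg_eq_iff_eq_neg]
    rcases lt_or_gt_of_ne hq0 with hs | hs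
    · refine ⟨(⟨(-w.symm n - 1).toNat, by omega⟩, false), ?_⟩
      rintro ⟨⟨j, hj⟩, s⟩
      cases s <;> simp [hinv, hinv'] <;> omega
    · refine ⟨(⟨(w.symm n).toNat, by omega⟩, true), ?_⟩
      rintro ⟨⟨j, hj⟩, s⟩
      cases s <;> simp [hinv, hinv'] <;> omega
  refine ⟨e, ?_, ?_⟩
  · have h1 := (he e).1 rfl
    obtain ⟨⟨j, hj⟩, s⟩ := e
    have b1 := hw.bound (i := j) (by omega) (by omega)
    unfold gap
    cases s
    · simp only [Bool.false_eq_true, if_false] at h1 ⊢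
      by_cases h0 : j = 0
      · subst h0
        simp at h1 ⊢
        omega
      · rw [if_neg h0]
        -- `w` fixes `n + 1`, so `w (n + 1) = -n` is impossible and `j ≠ n`
        by_cases hjn : j = n
        · rw [hjn, hw.top] at h1
          omega
        · rw [if_neg hjn]
          exact not_lll (by omega)
    · simp only [if_true] at h1 ⊢
      by_cases h0 : j = 0
      · rw [h0] at h1
        simp [hw.zero] at h1
        omega
      · rw [if_neg h0]
        by_cases hjn : j = n
        · rw [if_pos hjn, ← hjn]
          omega
        · have b2 := hw.bound (i := (j : ℤ) + 1) (by omega) (by omega)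
          rw [if_neg hjn]
          exact not_lll (by omega)
  · intro q
    rw [if_congr (he q) rfl rfl]
    obtain ⟨⟨j, hj⟩, s⟩ := q
    have b1 := hw.bound (i := j) (by omega) (by omega)
    rw [if_congr (gap_left _ _ _ hw _ _) rfl rfl, if_congr (gap_right _ _ _ hw _ _) rfl rfl]
    cases s
    · simp only [Bool.false_eq_true, if_false]
      have hl : ¬ (if j = 0 then 2 ≤ -((n : ℤ) + 1) else Lll (w j) (-((n : ℤ) + 1))) := by
        split_ifs
        · omega
        · exact not_lll (by omega)
      rw [if_neg hl, zero_add]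
      by_cases hjn : j = n
      · have := hw.top
        simp only [hjn, if_true]
        grind
      · have b2 := hw.bound (i := (j : ℤ) + 1) (by omega) (by omega)
        simp only [hjn, if_false, lll_bot hn b2.1]
        grind
    · simp only [if_true]
      have hr : ¬ (if j = n then (n : ℤ) + 1 ≤ -2 else Lll ((n : ℤ) + 1) (w ((j : ℤ) + 1))) := by
        split_ifs
        · omega
        · have b2 := hw.bound (i := (j : ℤ) + 1) (by omega) (by omega)
          exact not_lll (by omega)
      rw [if_neg hr, add_zero]
      by_cases h0 : j = 0
      · have := hw.zero
        subst h0
        simp only [if_true, Nat.cast_zero]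
        grind
      · simp only [h0, if_false, lll_top hn b1.2]
        grind

/-- `basc` and `des_B` are equidistributed on `X_n`, tested against an arbitrary function `F`. -/
lemma sum_basc_eq_sum_desB (m : ℕ) (F : ℕ → ℕ) :
    ∑ w ∈ Xs m, F (basc (m + 1) w) = ∑ w ∈ Xs m, F (desB (m + 1) w) := by
  have hb : ∀ w ∈ Xs m, F (basc (m + 1) w) = _ := fun w _ =>
    congrArg F (basc_eq_gstat (by omega) w)
  have hd : ∀ w ∈ Xs m, F (desB (m + 1) w) = _ := fun w hw =>
    congrArg F (desB_eq_gstat (by omega) ((mem_Xs m w).1 hw).1)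
  rw [Finset.sum_congr rfl hb, Finset.sum_congr rfl hd]
  refine equidistributed (fun n w h => step_basc h) (fun n w h => step_des h) ?_ m F
  simp [gstat, gap]
  omega

lemma ncard_Xn (m : ℕ) (p : Equiv.Perm ℤ → Prop) :
    {w : Equiv.Perm ℤ | InXn (m + 1) w ∧ p w}.ncard = ((Xs m).filter p).card := by
  rw [← Set.ncard_coe_finset]
  congr 1
  ext w
  simp [mem_Xs]

lemma psiN_eq_des {n : ℕ} (hn : 1 ≤ n) (k : ℕ) :
    psiN n k = {w : Equiv.Perm ℤ | InXn n w ∧ desB n w = k}.ncard := by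
  obtain ⟨m, rfl⟩ : ∃ m, n = m + 1 := ⟨n - 1, by omega⟩
  rw [psiN, ncard_Xn m fun w => basc (m + 1) w = k, ncard_Xn m fun w => desB (m + 1) w = k,
    Finset.card_filter, Finset.card_filter]
  convert sum_basc_eq_sum_desB m fun t => if t = k then 1 else 0

/-! ### Negating all entries -/

/-- The signed permutation with window `-1 ⋯ -n`; left multiplication by it negates all entries. -/
def negAll (n : ℕ) : Equiv.Perm ℤ where
  toFun i := if -(n : ℤ) ≤ i ∧ i ≤ n then -i else i
  invFun i := if -(n : ℤ) ≤ i ∧ i ≤ n then -i else i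
  left_inv i := by grind
  right_inv i := by grind

lemma negAll_apply {n : ℕ} {i : ℤ} (h1 : -(n : ℤ) ≤ i) (h2 : i ≤ n) : negAll n i = -i :=
  if_pos ⟨h1, h2⟩

lemma negAll_mul_self (n : ℕ) (w : Equiv.Perm ℤ) : negAll n * (negAll n * w) = w := by
  ext i
  exact (negAll n).left_inv (w i)

lemma isSignedPerm_negAll {n : ℕ} {w : Equiv.Perm ℤ} (h : IsSignedPerm n w) :
    IsSignedPerm n (negAll n * w) := by
  refine ⟨fun i => ?_, fun i hi => ?_⟩
  · change (if _ then _ else _) = -(if _ then _ else _)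
    rw [h.1]
    grind
  · change (if _ then _ else _) = i
    rw [h.2 i hi]
    rw [lt_abs] at hi
    rw [if_neg (by omega)]

lemma desB_negAll_add {n : ℕ} {w : Equiv.Perm ℤ} (hw : IsSignedPerm n w) :
    desB n (negAll n * w) + desB n w = n := by
  have h := Finset.card_filter_add_card_filter_not (s := Finset.range n)
    (p := fun i : ℕ => w ((i : ℤ) + 1) < w (i : ℤ))
  rw [Finset.card_range, add_comm] at h
  have h1 : desB n (negAll n * w)
      = ((Finset.range n).filter fun i : ℕ => ¬ w ((i : ℤ) + 1) < w (i : ℤ)).card := by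
    rw [desB_eq_card]
    congr 1
    refine Finset.filter_congr fun i hi => ?_
    rw [Finset.mem_range] at hi
    have b1 := hw.bound (i := i) (by omega) (by omega)
    have b2 := hw.bound (i := (i : ℤ) + 1) (by omega) (by omega)
    have hne : w ((i : ℤ) + 1) ≠ w i := fun h => by
      have := w.injective h
      omega
    rw [Equiv.Perm.mul_apply, Equiv.Perm.mul_apply, negAll_apply b1.1 b1.2,
      negAll_apply b2.1 b2.2]
    omega
  rw [h1, desB_eq_card]
  exact h

lemma symm_negAll_one {n : ℕ} (hn : 1 ≤ n) {w : Equiv.Perm ℤ} (hw : IsSignedPerm n w) :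
    (negAll n * w).symm 1 = -w.symm 1 := by
  rw [Equiv.symm_apply_eq, Equiv.Perm.mul_apply, hw.1, Equiv.apply_symm_apply,
    negAll_apply (by omega) (by omega), neg_neg]

/-- The signed permutations with `k` descents outside `X_n` are the negatives of those with `n - k`
descents inside `X_n`. -/
lemma ncard_des_eq {n k : ℕ} (hn : 1 ≤ n) (hk : k ≤ n) :
    {w : Equiv.Perm ℤ | IsSignedPerm n w ∧ desB n w = k}.ncard =
      {w : Equiv.Perm ℤ | InXn n w ∧ desB n w = k}.ncard
        + {w : Equiv.Perm ℤ | InXn n w ∧ desB n w = n - k}.ncard := by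
  have hfin : ∀ t, {w : Equiv.Perm ℤ | InXn n w ∧ desB n w = t}.Finite := fun t =>
    (Xs (n - 1)).finite_toSet.subset fun w hw => by
      rw [Finset.mem_coe, mem_Xs, Nat.sub_add_cancel hn]
      exact hw.1
  rw [← Set.ncard_image_of_injective {w : Equiv.Perm ℤ | InXn n w ∧ desB n w = n - k}
      (mul_right_injective (negAll n)),
    ← Set.ncard_union_eq ?_ (hfin k) ((hfin (n - k)).image _)]
  · congr 1
    ext w
    simp only [Set.mem_ofPred_eq, Set.mem_union, Set.mem_image]
    constructor
    · rintro ⟨hw, hd⟩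
      by_cases hpos : 0 < w.symm 1
      · exact Or.inl ⟨⟨hw, hpos⟩, hd⟩
      · refine Or.inr ⟨negAll n * w, ⟨⟨isSignedPerm_negAll hw, ?_⟩, ?_⟩, negAll_mul_self n w⟩
        · have h0 : w.symm 1 ≠ 0 := by
            intro h0
            rw [Equiv.symm_apply_eq, hw.zero] at h0
            omega
          rw [symm_negAll_one hn hw]
          omega
        · have := desB_negAll_add hw
          omega
    · rintro (⟨hw, hd⟩ | ⟨v, ⟨hv, hd⟩, rfl⟩)
      · exact ⟨hw.1, hd⟩
      · have := desB_negAll_add hv.1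
        exact ⟨isSignedPerm_negAll hv.1, by omega⟩
  · rw [Set.disjoint_left]
    rintro w ⟨hw, -⟩ ⟨v, ⟨hv, -⟩, rfl⟩
    have h1 := hw.2
    have h2 := hv.2
    rw [symm_negAll_one hn hv.1] at h1
    omega

/-- Corollary: `Ψ_{C_n}(t) + tⁿ Ψ_{C_n}(t⁻¹) = E_{B_n}(t)`.
For every `n ≥ 1` and every `0 ≤ k ≤ n`, `ψ_{n,k} + ψ_{n,n-k} = B_{n,k}`. -/
theorem psi_plus_reversed_eq_eulerianB (n : ℕ) (hn : 1 ≤ n) (k : ℕ) (hk : k ≤ n) :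
    psiN n k + psiN n (n - k)
      = {w : Equiv.Perm ℤ | IsSignedPerm n w ∧ desB n w = k}.ncard := by
  rw [psiN_eq_des hn, psiN_eq_des hn, ncard_des_eq hn hk]
end

section
/- In the ring of formal power series in x with coefficients in ℚ[t], the following identity holds: Σ_{n≥0} Ψ_{C_{n+1}}(t)·xⁿ/n! = exp(3x(t−1)) · ( Σ_{m≥0} E_m^A(t)·2^m·x^m/m! )², where exp(3x(t−1)) := Σ_{m≥0} 3^m (t−1)^m x^m/m!. -/
/-!
The exponential generating function of `Ψ_{C_{n+1}}` and the right-hand side satisfy the same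
first order linear differential equation in `x` and `t`, and agree at `x = 0`.

*Insertion for type C.* With `w_0 = w_{n+1} = 0`, the big ascents of `w` are exactly the gaps
`(w_i, w_{i+1})`, `0 ≤ i ≤ n`, with `w_i ≪ w_{i+1}`. Every element of `X_{n+1}` arises uniquely by
inserting `n + 1` or `-(n + 1)` into one of the `n + 1` gaps of an element of `X_n`. The insertion
keeps the number `k` of big ascents if the gap was one, and raises it by one otherwise, with a
single exception: inserting `n + 1` right after `n`, or `-(n + 1)` right before `-n`, whichever of
`±n` occurs, also keeps `k`. Hence `t^k` becomes `(2k + 1) t^k + (2n + 1 - 2k) t^{k+1}`, that is,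
`Ψ_{n+1} = (1 + (2n + 1) t) Ψ_n + 2 t (1 - t) Ψ_n'`.

*Insertion for type A.* In the same way, inserting the largest letter gives
`E_{m+1} = (1 + m t) E_m + t (1 - t) E_m'`.
Both insertions are instances of `sum_insert_low` and `sum_insert_high`, which count related
adjacent pairs in a list for an arbitrary relation with one special letter; `psiCQ_eq_insPoly` and
`eulerianA_eq_insPoly` identify the polynomials with sums over words built by insertion.

*Generating functions.* The recurrences say that `f = Σ E_m (2x)^m / m!` satisfies
`f_x = 2 f + 2 t x f_x + 2 t (1 - t) f_t` and that `G = Σ Ψ_{n+1} x^n / n!` satisfies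
`G_x = (1 + 3t) G + 2 t x G_x + 2 t (1 - t) G_t`. By the Leibniz rule `exp(3x(t-1)) f²` satisfies
the latter equation too (`isEulerianPDE_mul_sq`), which determines all coefficients from the
constant one (`IsEulerianPDE.unique`).
-/


open scoped Classical

/-! ### Counting related gaps under insertion -/

/-- The number of adjacent pairs `(x, y)` in the list `a :: l ++ [e]` with `R x y`. -/
noncomputable def gapCount (R : ℤ → ℤ → Prop) (e : ℤ) : ℤ → List ℤ → ℕ
  | a, [] => if R a e then 1 else 0
  | a, b :: l => (if R a b then 1 else 0) + gapCount R e b l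

/-- Insertion of a letter `N` at the low end of the relation: `R a N` always fails, and
`R N b` holds except for the special letter `s`. Then a related gap is destroyed and replaced by
one related gap, an unrelated gap yields an extra one, and each gap just before an `s` (which is
never related) keeps the count. -/
lemma sum_insert_low (R : ℤ → ℤ → Prop) (e N s : ℤ) (l : List ℤ) : ∀ a : ℤ,
    (∀ x ∈ a :: l, ¬ R x N) → (∀ y ∈ e :: l, R N y ↔ y ≠ s) → (∀ x ∈ a :: l, ¬ R x s) →
    ((List.permutations'Aux N l).map
        (fun l' => (Polynomial.X : Polynomial ℚ) ^ gapCount R e a l')).sum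
      = (gapCount R e a l : Polynomial ℚ) * Polynomial.X ^ gapCount R e a l
        + ((l.length : Polynomial ℚ) + 1 - (gapCount R e a l : Polynomial ℚ))
            * Polynomial.X ^ (gapCount R e a l + 1)
        + ((l ++ [e]).count s : Polynomial ℚ)
            * (Polynomial.X ^ gapCount R e a l - Polynomial.X ^ (gapCount R e a l + 1)) := by
  induction l with
  | nil =>
    intro a h1 h2 h3
    have h1' := h1 a (by simp)
    have h2' := h2 e (by simp)
    have h3' := h3 a (by simp)
    by_cases hs : e = s
    · subst hs
      simp [List.permutations'Aux, gapCount, h1', h2', h3']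
    · by_cases hr : R a e <;>
        simp [List.permutations'Aux, gapCount, h1', h2', hr, hs]
  | cons y ys ih =>
    intro a h1 h2 h3
    have ih' := ih y (fun x hx => h1 x (by simp_all)) (fun x hx => h2 x (by
      simp only [List.mem_cons] at hx ⊢; tauto)) (fun x hx => h3 x (by simp_all))
    have h1a := h1 a (by simp)
    have h2y := h2 y (by simp)
    have h3a := h3 a (by simp)
    simp only [List.permutations'Aux, List.map_cons, List.sum_cons, List.map_map,
      Function.comp_def, gapCount, pow_add, List.sum_map_mul_left, List.cons_append,
      List.length_cons, List.count_cons]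
    rw [ih']
    by_cases hs : y = s
    · subst hs
      simp [h1a, h2y, h3a]
      ring
    · by_cases hr : R a y <;> simp [h1a, h2y, hs, hr] <;> ring

/-- The mirror image of `sum_insert_low`: `R N b` always fails, and `R a N` holds except for the
special letter `s`, after which no gap is related. -/
lemma sum_insert_high (R : ℤ → ℤ → Prop) (e N s : ℤ) (l : List ℤ) : ∀ a : ℤ,
    (∀ y ∈ e :: l, ¬ R N y) → (∀ x ∈ a :: l, R x N ↔ x ≠ s) → (∀ y ∈ e :: l, ¬ R s y) →
    ((List.permutations'Aux N l).map
        (fun l' => (Polynomial.X : Polynomial ℚ) ^ gapCount R e a l')).sum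
      = (gapCount R e a l : Polynomial ℚ) * Polynomial.X ^ gapCount R e a l
        + ((l.length : Polynomial ℚ) + 1 - (gapCount R e a l : Polynomial ℚ))
            * Polynomial.X ^ (gapCount R e a l + 1)
        + ((a :: l).count s : Polynomial ℚ)
            * (Polynomial.X ^ gapCount R e a l - Polynomial.X ^ (gapCount R e a l + 1)) := by
  induction l with
  | nil =>
    intro a h1 h2 h3
    have h1' := h1 e (by simp)
    have h2' := h2 a (by simp)
    have h3' := h3 e (by simp)
    by_cases hs : a = s
    · subst hs
      simp [List.permutations'Aux, gapCount, h1', h2', h3']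
    · by_cases hr : R a e <;>
        simp [List.permutations'Aux, gapCount, h1', h2', hr, hs]
  | cons y ys ih =>
    intro a h1 h2 h3
    have ih' := ih y (fun x hx => h1 x (by simp only [List.mem_cons] at hx ⊢; tauto))
      (fun x hx => h2 x (by simp_all))
      (fun x hx => h3 x (by simp only [List.mem_cons] at hx ⊢; tauto))
    have h1y := h1 y (by simp)
    have h2a := h2 a (by simp)
    have h3y := h3 y (by simp)
    simp only [List.permutations'Aux, List.map_cons, List.sum_cons, List.map_map,
      Function.comp_def, gapCount, pow_add, List.sum_map_mul_left, List.length_cons]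
    rw [ih', List.count_cons (a := s) (b := a)]
    by_cases hs : a = s
    · subst hs
      simp [h1y, h2a, h3y]
      ring
    · by_cases hr : R a y <;> simp [h1y, h2a, hs, hr] <;> ring

lemma gapCount_eq_sum (R : ℤ → ℤ → Prop) (e : ℤ) (l : List ℤ) : ∀ a : ℤ,
    gapCount R e a l = ∑ i ∈ Finset.range (l.length + 1),
      if R ((a :: l).getD i e) (l.getD i e) then 1 else 0 := by
  induction l with
  | nil => intro a; rw [gapCount, List.length_nil, zero_add, Finset.sum_range_one]; simp
  | cons y ys ih =>
    intro a
    rw [gapCount, ih, List.length_cons, Finset.sum_range_succ' _ (ys.length + 1), add_comm]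
    simp

/-! ### Words built by successive insertion -/

/-- All words obtained from the empty word by inserting, for `m = 0, 1, …`, one letter of the
alphabet `V m` at an arbitrary position. -/
def insWords (V : ℕ → List ℤ) : ℕ → List (List ℤ)
  | 0 => [[]]
  | m + 1 => (insWords V m).flatMap fun l => (V m).flatMap fun x => List.permutations'Aux x l

lemma mem_permutations'Aux_iff (x : ℤ) (l l' : List ℤ) :
    l' ∈ List.permutations'Aux x l ↔ ∃ l₁ l₂, l = l₁ ++ l₂ ∧ l' = l₁ ++ x :: l₂ := by
  induction l generalizing l' with
  | nil => simp [List.permutations'Aux]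
  | cons y ys ih =>
    simp only [List.permutations'Aux, List.mem_cons, List.mem_map, ih]
    constructor
    · rintro (rfl | ⟨_, ⟨l₁, l₂, rfl, rfl⟩, rfl⟩)
      · exact ⟨[], y :: ys, rfl, rfl⟩
      · exact ⟨y :: l₁, l₂, rfl, rfl⟩
    · rintro ⟨l₁, l₂, h, rfl⟩
      cases l₁ with
      | nil => left; simp at h; simp [h]
      | cons z zs =>
        simp only [List.cons_append, List.cons.injEq] at h
        exact Or.inr ⟨zs ++ x :: l₂, ⟨zs, l₂, h.2, rfl⟩, by simp [h.1]⟩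

/-- If the alphabets are disjoint, `ρ x` being the index of the alphabet containing `x`, then the
words of length `m` are those with one letter from each of `V 0, …, V (m - 1)`. -/
lemma mem_insWords (V : ℕ → List ℤ) (ρ : ℤ → ℕ) (hρ : ∀ m, ∀ x ∈ V m, ρ x = m) (m : ℕ) :
    ∀ l, l ∈ insWords V m ↔ (l.map ρ).Perm (List.range m) ∧ ∀ x ∈ l, x ∈ V (ρ x) := by
  induction m with
  | zero => intro l; simp +contextual [insWords]
  | succ m ih =>
    intro l
    simp only [insWords, List.mem_flatMap, ih, mem_permutations'Aux_iff, List.range_succ]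
    constructor
    · rintro ⟨_, ⟨hp, hV⟩, x, hx, l₁, l₂, rfl, rfl⟩
      refine ⟨?_, ?_⟩
      · have h1 : ((l₁ ++ x :: l₂).map ρ).Perm (m :: (l₁ ++ l₂).map ρ) := by
          rw [← hρ m x hx, ← List.map_cons]
          exact List.perm_middle.map ρ
        exact h1.trans ((hp.cons m).trans (List.perm_append_singleton m _).symm)
      · intro y hy
        simp only [List.mem_append, List.mem_cons] at hy hV
        rcases hy with hy | rfl | hy
        · exact hV y (Or.inl hy)
        · rwa [hρ m y hx]
        · exact hV y (Or.inr hy)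
    · rintro ⟨hp, hV⟩
      have hm : m ∈ l.map ρ := hp.mem_iff.2 (by simp)
      obtain ⟨x, hxl, hx⟩ := List.mem_map.1 hm
      obtain ⟨l₁, l₂, rfl⟩ := List.append_of_mem hxl
      refine ⟨l₁ ++ l₂, ⟨?_, fun y hy => hV y (by simp at hy ⊢; tauto)⟩, x, ?_,
        l₁, l₂, rfl, rfl⟩
      · have h1 : ((l₁ ++ x :: l₂).map ρ).Perm (m :: (l₁ ++ l₂).map ρ) := by
          rw [← hx, ← List.map_cons]
          exact List.perm_middle.map ρ
        exact (h1.symm.trans (hp.trans (List.perm_append_singleton m _))).cons_inv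
      · have := hV x hxl
        rwa [hx] at this

lemma nodup_insWords (V : ℕ → List ℤ) (ρ : ℤ → ℕ) (hρ : ∀ m, ∀ x ∈ V m, ρ x = m)
    (hV : ∀ m, (V m).Nodup) (m : ℕ) : (insWords V m).Nodup := by
  induction m with
  | zero => simp [insWords]
  | succ m ih =>
    -- the letters of a word of length `m` have rank `< m`
    have hlt : ∀ l ∈ insWords V m, ∀ y ∈ l, ρ y ≠ m := by
      intro l hl y hy
      have h := ((mem_insWords V ρ hρ m l).1 hl).1
      have := h.mem_iff.1 (List.mem_map_of_mem hy)
      simp at this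
      omega
    have hfil : ∀ l ∈ insWords V m, l.filter (fun y => ρ y ≠ m) = l ∧
        l.filter (fun y => ρ y = m) = [] := by
      intro l hl
      simp only [List.filter_eq_self, List.filter_eq_nil_iff]
      exact ⟨fun y hy => by simpa using hlt l hl y hy, fun y hy => by simpa using hlt l hl y hy⟩
    -- hence both the old word and the inserted letter can be read off from the new word
    have key : ∀ l ∈ insWords V m, ∀ x ∈ V m, ∀ l' ∈ List.permutations'Aux x l,
        l'.filter (fun y => ρ y ≠ m) = l ∧ l'.filter (fun y => ρ y = m) = [x] := by
      intro l hl x hx l' hl'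
      have h := hfil l hl
      obtain ⟨l₁, l₂, rfl, rfl⟩ := (mem_permutations'Aux_iff _ _ _).1 hl'
      simp only [List.filter_append, List.append_eq_nil_iff] at h
      have hxm := hρ m x hx
      constructor
      · simpa [List.filter_append, List.filter_cons, hxm] using h.1
      · rw [List.filter_append, List.filter_cons_of_pos (by simpa using hxm), h.2.1, h.2.2]
        rfl
    rw [insWords, List.nodup_flatMap]
    refine ⟨fun l hl => ?_, ih.imp_of_mem fun {l k} hl hk hne => ?_⟩
    · rw [List.nodup_flatMap]
      refine ⟨fun x hx => List.nodup_permutations'Aux_of_notMem _ _ fun hxl =>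
        hlt l hl x hxl (hρ m x hx), (hV m).imp_of_mem fun {x y} hx hy hne => ?_⟩
      intro l' h1 h2
      have := (key l hl x hx l' h1).2.symm.trans (key l hl y hy l' h2).2
      simp at this
      exact hne this
    · intro l' h1 h2
      obtain ⟨x, hx, h1⟩ := List.mem_flatMap.1 h1
      obtain ⟨y, hy, h2⟩ := List.mem_flatMap.1 h2
      exact hne ((key l hl x hx l' h1).1.symm.trans (key k hk y hy l' h2).1)

lemma length_of_mem_insWords (V : ℕ → List ℤ) (ρ : ℤ → ℕ) (hρ : ∀ m, ∀ x ∈ V m, ρ x = m)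
    {m : ℕ} {l : List ℤ} (hl : l ∈ insWords V m) : l.length = m := by
  simpa using ((mem_insWords V ρ hρ m l).1 hl).1.length_eq

/-- The generating polynomial of `gapCount` over the words of length `m`. -/
noncomputable def insPoly (R : ℤ → ℤ → Prop) (e : ℤ) (V : ℕ → List ℤ) (m : ℕ) : Polynomial ℚ :=
  ((insWords V m).map fun l => Polynomial.X ^ gapCount R e e l).sum

lemma X_mul_derivative_X_pow (k : ℕ) :
    Polynomial.X * Polynomial.derivative ((Polynomial.X : Polynomial ℚ) ^ k)
      = (k : Polynomial ℚ) * Polynomial.X ^ k := by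
  rw [Polynomial.derivative_X_pow]
  cases k with
  | zero => simp
  | succ k => simp [pow_succ]; ring

/-- If inserting a letter of `V m` replaces each `X ^ k` by `A X ^ k + B (X ^ k)'`, the generating
polynomials satisfy the corresponding recurrence. -/
lemma insPoly_succ (R : ℤ → ℤ → Prop) (e : ℤ) (V : ℕ → List ℤ) (m : ℕ) (A B : Polynomial ℚ)
    (h : ∀ l ∈ insWords V m,
      (((V m).flatMap fun x => List.permutations'Aux x l).map
          fun l' => (Polynomial.X : Polynomial ℚ) ^ gapCount R e e l').sum
        = A * Polynomial.X ^ gapCount R e e l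
          + B * Polynomial.derivative (Polynomial.X ^ gapCount R e e l)) :
    insPoly R e V (m + 1)
      = A * insPoly R e V m + B * Polynomial.derivative (insPoly R e V m) := by
  unfold insPoly
  rw [insWords]
  generalize insWords V m = L at h
  induction L with
  | nil => simp
  | cons l L ih =>
    rw [List.flatMap_cons, List.map_append, List.sum_append, h l (by simp),
      ih fun l' hl' => h l' (by simp [hl'])]
    simp only [List.map_cons, List.sum_cons, Polynomial.derivative_add]
    ring
/-! ### Eulerian polynomials -/

/-- Descents, with `-1` serving as a neutral end marker for words in nonnegative letters. -/
def descRel (a b : ℤ) : Prop := b < a ∧ 0 ≤ b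

/-- The alphabets `{0}, {1}, {2}, …`, so that the words are the permutations of `0, …, m - 1`. -/
def alphA (m : ℕ) : List ℤ := [(m : ℤ)]

lemma toNat_of_mem_alphA (m : ℕ) : ∀ x ∈ alphA m, Int.toNat x = m := by
  simp [alphA]

lemma mem_insWords_alphA_bounds {m : ℕ} {l : List ℤ} (hl : l ∈ insWords alphA m) :
    ∀ x ∈ l, 0 ≤ x ∧ x < m := by
  intro x hx
  obtain ⟨h1, h2⟩ := (mem_insWords alphA _ toNat_of_mem_alphA m l).1 hl
  have h3 := h1.mem_iff.1 (List.mem_map_of_mem hx)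
  have h4 := h2 x hx
  simp [alphA] at h3 h4
  omega

/-- The recurrence for the Eulerian polynomials: the largest letter keeps the number of descents
when it is inserted into a descent or at the end. -/
lemma insPoly_alphA_succ (m : ℕ) :
    insPoly descRel (-1) alphA (m + 1)
      = (1 + (m : Polynomial ℚ) * Polynomial.X) * insPoly descRel (-1) alphA m
        + Polynomial.X * (1 - Polynomial.X)
            * Polynomial.derivative (insPoly descRel (-1) alphA m) := by
  refine insPoly_succ _ _ _ _ _ _ fun l hl => ?_
  have hb := mem_insWords_alphA_bounds hl
  have hlen := length_of_mem_insWords alphA _ toNat_of_mem_alphA hl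
  have hins := sum_insert_low descRel (-1) m (-1) l (-1)
    (by
      intro x hx
      simp only [List.mem_cons] at hx
      rcases hx with rfl | hx
      · simp only [descRel]; omega
      · have := hb x hx; simp only [descRel]; omega)
    (by
      intro x hx
      simp only [List.mem_cons] at hx
      rcases hx with rfl | hx
      · simp only [descRel]; omega
      · have := hb x hx; simp only [descRel]; omega)
    (by intro x hx; simp [descRel])
  have hc : (l ++ [(-1 : ℤ)]).count (-1) = 1 := by
    have : (-1 : ℤ) ∉ l := fun h => by have := hb _ h; omega
    rw [List.count_append, List.count_eq_zero_of_not_mem this]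
    simp
  simp only [alphA, List.flatMap_cons, List.flatMap_nil, List.append_nil]
  rw [hins, hc, hlen]
  have hd := X_mul_derivative_X_pow (gapCount descRel (-1) (-1) l)
  push_cast
  linear_combination (-1 + Polynomial.X) * hd

/-- The one-line word of a permutation. -/
def permWord (m : ℕ) (σ : Equiv.Perm (Fin m)) : List ℤ := List.ofFn fun i => ((σ i : ℕ) : ℤ)

/-- The end marker `-1` after the last letter makes no descent, and neither does the one before
the first letter. -/
lemma gapCount_permWord (m : ℕ) (σ : Equiv.Perm (Fin m)) :
    gapCount descRel (-1) (-1) (permWord m σ) = desA m σ := by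
  have hlen : (permWord m σ).length = m := by simp [permWord]
  have hget : ∀ i (h : i < m), (permWord m σ).getD i (-1) = ((σ ⟨i, h⟩ : ℕ) : ℤ) := by
    intro i h
    simp [permWord, h]
  have hget' : ∀ i, m ≤ i → (permWord m σ).getD i (-1) = -1 := by
    intro i h
    rw [List.getD_eq_default _ _ (by omega)]
  rw [gapCount_eq_sum, hlen, Finset.sum_range_succ', desA, Finset.card_filter,
    Finset.sum_range]
  have h0 : ¬ descRel ((-1 :: permWord m σ).getD 0 (-1)) ((permWord m σ).getD 0 (-1)) := by
    simp only [List.getD_cons_zero, descRel]; omega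
  rw [if_neg h0, add_zero]
  refine Finset.sum_congr rfl fun i _ => if_congr ?_ rfl rfl
  rw [List.getD_cons_succ, hget i i.2]
  by_cases h : (i : ℕ) + 1 < m
  · rw [hget _ h]
    simp [descRel, h]
  · rw [hget' _ (by omega)]
    simp [descRel, h]

lemma eulerianA_eq_insPoly (m : ℕ) : EulerianA m = insPoly descRel (-1) alphA m := by
  have hmem := mem_insWords alphA _ toNat_of_mem_alphA m
  have hnd := nodup_insWords alphA _ toNat_of_mem_alphA (by simp [alphA]) m
  rw [EulerianA, insPoly, ← List.sum_toFinset _ hnd]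
  refine Finset.sum_bij (fun σ _ => permWord m σ) ?_ ?_ ?_ ?_
  · intro σ _
    rw [List.mem_toFinset, hmem]
    refine ⟨?_, ?_⟩
    · rw [List.perm_ext_iff_of_nodup _ List.nodup_range]
      · intro k
        simp only [permWord, List.map_ofFn, List.mem_ofFn, List.mem_range, Function.comp_def,
          Int.toNat_natCast]
        constructor
        · rintro ⟨i, rfl⟩
          exact (σ i).2
        · intro hk
          exact ⟨σ.symm ⟨k, hk⟩, by simp⟩
      · simp only [permWord, List.map_ofFn, Function.comp_def, Int.toNat_natCast]
        rw [List.nodup_ofFn]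
        exact fun i j h => σ.injective (Fin.ext h)
    · intro x hx
      simp only [permWord, List.mem_ofFn] at hx
      obtain ⟨i, rfl⟩ := hx
      simp [alphA]
  · intro σ _ τ _ h
    have := List.ofFn_injective h
    ext i
    have h2 := congrFun this i
    exact_mod_cast h2
  · intro l hl
    rw [List.mem_toFinset] at hl
    have hb := mem_insWords_alphA_bounds hl
    have hlen := length_of_mem_insWords alphA _ toNat_of_mem_alphA hl
    have hp := ((hmem l).1 hl).1
    subst hlen
    have hlt : ∀ i : Fin l.length, (l.get i).toNat < l.length := by
      intro i
      have := hb (l.get i) (List.get_mem _ _)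
      omega
    have hnd' : (l.map Int.toNat).Nodup := hp.nodup_iff.2 List.nodup_range
    have hinj : Function.Injective
        (fun i : Fin l.length => (⟨(l.get i).toNat, hlt i⟩ : Fin l.length)) := by
      intro i j h
      simp only [Fin.mk.injEq] at h
      have hg := hb (l.get i) (List.get_mem _ _)
      have hg' := hb (l.get j) (List.get_mem _ _)
      exact (List.nodup_iff_injective_get.1 (List.Nodup.of_map _ hnd')) (by omega)
    refine ⟨Equiv.ofBijective _ (Finite.injective_iff_bijective.1 hinj), Finset.mem_univ _, ?_⟩
    unfold permWord
    conv_rhs => rw [← List.ofFn_get l]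
    congr 1
    funext i
    have := hb (l.get i) (List.get_mem _ _)
    simp only [Equiv.ofBijective_apply]
    omega
  · intro σ _
    rw [gapCount_permWord]

/-! ### Signed permutations -/

/-- The alphabets `{1}, {±2}, {±3}, …`, so that the words of length `n` are the windows of the
elements of `X_n`. -/
def alphC : ℕ → List ℤ
  | 0 => [1]
  | m + 1 => [(m : ℤ) + 2, -((m : ℤ) + 2)]

lemma mem_alphC (m : ℕ) (x : ℤ) :
    x ∈ alphC m ↔ x.natAbs = m + 1 ∧ x ≠ -1 := by
  cases m with
  | zero => simp only [alphC, List.mem_singleton]; omega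
  | succ m => simp only [alphC, List.mem_cons, List.not_mem_nil, or_false]; omega

lemma rank_of_mem_alphC (m : ℕ) : ∀ x ∈ alphC m, x.natAbs - 1 = m := by
  intro x hx
  rw [mem_alphC] at hx
  omega

lemma mem_insWords_alphC {n : ℕ} {l : List ℤ} :
    l ∈ insWords alphC n ↔ (l.map fun x => x.natAbs - 1).Perm (List.range n)
      ∧ ∀ x ∈ l, x ≠ 0 ∧ x ≠ -1 := by
  rw [mem_insWords alphC (fun x => x.natAbs - 1) rank_of_mem_alphC n l]
  refine and_congr_right fun _ => forall₂_congr fun x _ => ?_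
  rw [mem_alphC]
  omega

lemma mem_insWords_alphC_bounds {n : ℕ} {l : List ℤ} (hl : l ∈ insWords alphC n) :
    ∀ x ∈ l, x ≠ 0 ∧ x ≠ -1 ∧ x.natAbs ≤ n := by
  intro x hx
  obtain ⟨h1, h2⟩ := mem_insWords_alphC.1 hl
  have h3 := h1.mem_iff.1 (List.mem_map_of_mem hx)
  have h4 := h2 x hx
  simp at h3
  omega

lemma Lll_zero_left (x : ℤ) : Lll 0 x ↔ 2 ≤ x :=
  ⟨fun ⟨c, _, _, _⟩ => by omega, fun h => ⟨1, by omega, by omega, by omega⟩⟩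

lemma Lll_zero_right (x : ℤ) : Lll x 0 ↔ x ≤ -2 :=
  ⟨fun ⟨c, _, _, _⟩ => by omega, fun h => ⟨-1, by omega, by omega, by omega⟩⟩

lemma not_Lll_of_le {a b : ℤ} (h : b ≤ a + 1) : ¬ Lll a b :=
  fun ⟨c, _, _, _⟩ => by omega

/-- Here `x.natAbs - 1` is the index of the alphabet `alphC _` containing `x`; the letters of
index `n` are `±(n + 1)`. -/
lemma count_add_count_neg {n : ℕ} (l : List ℤ) (hl : ∀ x ∈ l, x ≠ 0) :
    l.count ((n : ℤ) + 1) + l.count (-((n : ℤ) + 1))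
      = (l.map fun x => x.natAbs - 1).count n := by
  induction l with
  | nil => simp
  | cons x l ih =>
    have ih := ih fun y hy => hl y (by simp [hy])
    have hx := hl x (by simp)
    simp only [List.map_cons, List.count_cons, ← ih, beq_iff_eq]
    split_ifs <;> omega

/-- The recurrence for `Ψ`; words of length `n + 1` have `n + 2` gaps. It fails from length `0` to
length `1`, where only the letter `1` is inserted. -/
lemma insPoly_alphC_succ (n : ℕ) :
    insPoly Lll 0 alphC (n + 2)
      = (1 + 3 * Polynomial.X + 2 * (n : Polynomial ℚ) * Polynomial.X) * insPoly Lll 0 alphC (n + 1)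
        + 2 * (Polynomial.X * (1 - Polynomial.X))
            * Polynomial.derivative (insPoly Lll 0 alphC (n + 1)) := by
  refine insPoly_succ _ _ _ _ _ _ fun l hl => ?_
  have hb := mem_insWords_alphC_bounds hl
  have hlen := length_of_mem_insWords alphC _ rank_of_mem_alphC hl
  -- the letters `n + 1` and `-(n + 1)` are special for the insertion of `n + 2` and `-(n + 2)`
  have hhigh := sum_insert_high Lll 0 ((n : ℤ) + 2) ((n : ℤ) + 1) l 0
    (by
      intro x hx
      apply not_Lll_of_le
      simp only [List.mem_cons] at hx
      rcases hx with rfl | hx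
      · omega
      · have := hb x hx; omega)
    (by
      intro x hx
      have hx' : x ≤ n + 1 := by
        simp only [List.mem_cons] at hx
        rcases hx with rfl | hx
        · omega
        · have := hb x hx; omega
      constructor
      · rintro h rfl
        exact not_Lll_of_le (by omega) h
      · intro h
        exact ⟨n + 1, by omega, by omega, by omega⟩)
    (by
      intro x hx
      apply not_Lll_of_le
      simp only [List.mem_cons] at hx
      rcases hx with rfl | hx
      · omega
      · have := hb x hx; omega)
  have hlow := sum_insert_low Lll 0 (-((n : ℤ) + 2)) (-((n : ℤ) + 1)) l 0
    (by
      intro x hx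
      apply not_Lll_of_le
      simp only [List.mem_cons] at hx
      rcases hx with rfl | hx
      · omega
      · have := hb x hx; omega)
    (by
      intro x hx
      have hx' : -(n + 1) ≤ x := by
        simp only [List.mem_cons] at hx
        rcases hx with rfl | hx
        · omega
        · have := hb x hx; omega
      constructor
      · rintro h rfl
        exact not_Lll_of_le (by omega) h
      · intro h
        exact ⟨-(n + 1), by omega, by omega, by omega⟩)
    (by
      intro x hx
      apply not_Lll_of_le
      simp only [List.mem_cons] at hx
      rcases hx with rfl | hx
      · omega
      · have := hb x hx; omega)
  -- exactly one of the two special letters occurs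
  have hc : (0 :: l).count ((n : ℤ) + 1) + (l ++ [0]).count (-((n : ℤ) + 1)) = 1 := by
    have h1 := count_add_count_neg (n := n) l fun x hx => (hb x hx).1
    rw [(mem_insWords_alphC.1 hl).1.count_eq,
      List.count_eq_one_of_mem List.nodup_range (by simp)] at h1
    have h2 : (0 : ℤ) ≠ n + 1 := by omega
    have h3 : (0 : ℤ) ≠ -(n + 1) := by omega
    rw [List.count_cons_of_ne h2, List.count_append, List.count_singleton, if_neg (by simpa using h3)]
    exact h1
  have hc' : (((0 :: l).count ((n : ℤ) + 1) : ℕ) : Polynomial ℚ)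
      + (((l ++ [0]).count (-((n : ℤ) + 1)) : ℕ) : Polynomial ℚ) = 1 := by exact_mod_cast hc
  simp only [alphC, List.flatMap_cons, List.flatMap_nil, List.append_nil, List.map_append,
    List.sum_append]
  rw [hhigh, hlow, hlen]
  have hd := X_mul_derivative_X_pow (gapCount Lll 0 0 l)
  push_cast
  linear_combination (-2 + 2 * Polynomial.X) * hd
    + (Polynomial.X ^ gapCount Lll 0 0 l - Polynomial.X ^ (gapCount Lll 0 0 l + 1)) * hc'

/-- The window `w_1 ⋯ w_n`. -/
def window (n : ℕ) (w : Equiv.Perm ℤ) : List ℤ := List.ofFn fun i : Fin n => w ((i : ℕ) + 1)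

/-- With the conventions `w_0 = w_{n+1} = 0`, the conditions `w_1 ≥ 2` and `w_n ≤ -2` become
`w_0 ≪ w_1` and `w_n ≪ w_{n+1}`. -/
lemma gapCount_window {n : ℕ} (hn : 1 ≤ n) (w : Equiv.Perm ℤ) :
    gapCount Lll 0 0 (window n w) = basc n w := by
  have hlen : (window n w).length = n := by simp [window]
  have hget : ∀ i, i < n → (window n w).getD i 0 = w ((i : ℤ) + 1) := by
    intro i h
    simp [window, h]
  have hget' : (window n w).getD n 0 = 0 := by
    rw [List.getD_eq_default _ _ (by omega)]
  have hIcc : ∀ f : ℤ → ℕ, ∑ i ∈ Finset.Icc (1 : ℤ) n, f i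
      = ∑ i ∈ Finset.range n, f ((i : ℤ) + 1) := by
    intro f
    refine Finset.sum_nbij' (fun i => (i - 1).toNat) (fun i => (i : ℤ) + 1) ?_ ?_ ?_ ?_ ?_
    · intro i hi; simp only [Finset.mem_Icc, Finset.mem_range] at *; omega
    · intro i hi; simp only [Finset.mem_Icc, Finset.mem_range] at *; omega
    · intro i hi; simp only [Finset.mem_Icc] at *; omega
    · intro i hi; simp
    · intro i hi
      simp only [Finset.mem_Icc] at hi
      congr 1
      omega
  rw [gapCount_eq_sum, hlen, Finset.sum_range_succ', basc, Finset.card_filter,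
    Finset.sum_insert (by simp), hIcc, add_comm]
  congr 1
  · simp only [List.getD_cons_zero, if_true]
    rw [hget 0 (by omega)]
    simp [Lll_zero_left]
  · refine Finset.sum_congr rfl fun i hi => if_congr ?_ rfl rfl
    rw [Finset.mem_range] at hi
    rw [List.getD_cons_succ, hget i hi, if_neg (by omega)]
    by_cases h : i + 1 = n
    · rw [if_pos (by omega), h, hget', Lll_zero_right, ← h]
      push_cast
      rfl
    · rw [if_neg (by omega), hget (i + 1) (by omega)]
      push_cast
      rfl

lemma IsSignedPerm.abs_le {n : ℕ} {w : Equiv.Perm ℤ} (hw : IsSignedPerm n w) {i : ℤ}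
    (hi : |i| ≤ n) : |w i| ≤ n := by
  by_contra h
  have := hw.2 (w i) (by omega)
  rw [w.injective this] at h
  exact h hi

lemma IsSignedPerm.map_zero {n : ℕ} {w : Equiv.Perm ℤ} (hw : IsSignedPerm n w) : w 0 = 0 := by
  have := hw.1 0
  simp at this
  omega

lemma IsSignedPerm.natAbs_inj {n : ℕ} {w : Equiv.Perm ℤ} (hw : IsSignedPerm n w) {i j : ℤ}
    (h : (w i).natAbs = (w j).natAbs) : i.natAbs = j.natAbs := by
  rcases Int.natAbs_eq_natAbs_iff.1 h with h | h
  · rw [w.injective h]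
  · rw [← hw.1] at h
    rw [w.injective h, Int.natAbs_neg]

lemma window_mem {n : ℕ} {w : Equiv.Perm ℤ} (hw : InXn n w) :
    window n w ∈ insWords alphC n := by
  obtain ⟨hs, hpos⟩ := hw
  have hne : ∀ i : Fin n, w ((i : ℕ) + 1) ≠ 0 := by
    intro i h
    rw [← hs.map_zero] at h
    have := w.injective h
    omega
  rw [mem_insWords_alphC]
  refine ⟨?_, ?_⟩
  · have hnd : ((window n w).map fun x => x.natAbs - 1).Nodup := by
      simp only [window, List.map_ofFn, Function.comp_def]
      rw [List.nodup_ofFn]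
      intro i j h
      have h1 := hne i
      have h2 := hne j
      have := hs.natAbs_inj (i := (i : ℕ) + 1) (j := (j : ℕ) + 1) (by simp only at h; omega)
      exact Fin.ext (by omega)
    refine List.Subperm.perm_of_length_le (hnd.subperm ?_) (by simp [window])
    intro k hk
    simp only [window, List.map_ofFn, List.mem_ofFn, Function.comp_def] at hk
    obtain ⟨i, rfl⟩ := hk
    have h1 := hne i
    have h2 := hs.abs_le (i := (i : ℕ) + 1) (by rw [abs_of_nonneg (by omega)]; omega)
    rw [Int.abs_eq_natAbs] at h2
    rw [List.mem_range]
    omega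
  · intro x hx
    simp only [window, List.mem_ofFn] at hx
    obtain ⟨i, rfl⟩ := hx
    refine ⟨hne i, fun h => ?_⟩
    have h1 : w (-((i : ℕ) + 1)) = 1 := by rw [hs.1, h]; rfl
    rw [← h1, Equiv.symm_apply_apply] at hpos
    omega

lemma window_injOn (n : ℕ) : Set.InjOn (window n) {w | InXn n w} := by
  rintro w ⟨hw, _⟩ u ⟨hu, _⟩ h
  have h' := List.ofFn_injective h
  have hpos : ∀ i : ℤ, 1 ≤ i → w i = u i := by
    intro i hi
    by_cases hin : i ≤ n
    · have := congrFun h' ⟨(i - 1).toNat, by omega⟩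
      simp only at this
      rwa [show (((i - 1).toNat : ℕ) : ℤ) + 1 = i by omega] at this
    · rw [hw.2 i (by rw [abs_of_nonneg (by omega)]; omega),
        hu.2 i (by rw [abs_of_nonneg (by omega)]; omega)]
  ext i
  rcases lt_trichotomy i 0 with hi | rfl | hi
  · have := hpos (-i) (by omega)
    rw [hw.1, hu.1] at this
    omega
  · rw [hw.map_zero, hu.map_zero]
  · exact hpos i hi

/-- The odd function on `ℤ` with window `l` that fixes everything beyond it. -/
def oddExt (l : List ℤ) (i : ℤ) : ℤ :=
  if i.natAbs ≤ l.length then i.sign * l.getD (i.natAbs - 1) 0 else i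

/-- Every word is the window of an element of `X_n`, namely of its extension `oddExt`. -/
lemma exists_window_eq {n : ℕ} {l : List ℤ} (hn : 1 ≤ n) (hl : l ∈ insWords alphC n) :
    ∃ w, InXn n w ∧ window n w = l := by
  have hb := mem_insWords_alphC_bounds hl
  have hlen := length_of_mem_insWords alphC _ rank_of_mem_alphC hl
  obtain ⟨hp, -⟩ := mem_insWords_alphC.1 hl
  have hnd : (l.map fun x => x.natAbs - 1).Nodup := hp.nodup_iff.2 List.nodup_range
  have hget : ∀ i, i < n → l.getD i 0 ∈ l := by
    intro i hi
    rw [List.getD_eq_getElem _ _ (by omega)]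
    exact List.getElem_mem _
  have hinjl : ∀ i j, i < n → j < n → (l.getD i 0).natAbs = (l.getD j 0).natAbs → i = j := by
    intro i j hi hj h
    rw [List.getD_eq_getElem _ _ (by omega), List.getD_eq_getElem _ _ (by omega)] at h
    refine (hnd.getElem_inj_iff (hi := by simp; omega) (hj := by simp; omega)).1 ?_
    simp only [List.getElem_map, h]
  have hsurjl : ∀ k, 1 ≤ k → k ≤ n → ∃ j, j < n ∧ (l.getD j 0).natAbs = k := by
    intro k hk hkn
    have : k - 1 ∈ l.map fun x => x.natAbs - 1 := hp.mem_iff.2 (by simp; omega)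
    obtain ⟨x, hx, hxk⟩ := List.mem_map.1 this
    obtain ⟨j, hj, rfl⟩ := List.getElem_of_mem hx
    have := hb _ hx
    exact ⟨j, by omega, by rw [List.getD_eq_getElem _ _ hj]; omega⟩
  have hout : ∀ i : ℤ, n < i.natAbs → oddExt l i = i := by
    intro i hi
    rw [oddExt, if_neg (by omega)]
  have hpos : ∀ i : ℕ, i < n → oddExt l ((i : ℤ) + 1) = l.getD i 0 := by
    intro i hi
    rw [oddExt, if_pos (by omega), Int.sign_eq_one_of_pos (by omega), one_mul]
    congr 1
  have hodd : ∀ i, oddExt l (-i) = - oddExt l i := by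
    intro i
    unfold oddExt
    rw [Int.natAbs_neg, Int.sign_neg]
    split_ifs <;> ring
  have hzero : oddExt l 0 = 0 := by simp [oddExt]
  have hnat : ∀ i : ℤ, 1 ≤ i.natAbs → i.natAbs ≤ n →
      (oddExt l i).natAbs = (l.getD (i.natAbs - 1) 0).natAbs := by
    intro i h1 h2
    rw [oddExt, if_pos (by omega), Int.natAbs_mul, Int.natAbs_sign_of_ne_zero (by omega), one_mul]
  have hnatAbs : ∀ i j : ℤ, (oddExt l i).natAbs = (oddExt l j).natAbs → i.natAbs = j.natAbs := by
    have hrange : ∀ i : ℤ, (1 ≤ i.natAbs ∧ i.natAbs ≤ n ∧ 1 ≤ (oddExt l i).natAbs ∧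
        (oddExt l i).natAbs ≤ n) ∨ (i = 0 ∧ oddExt l i = 0) ∨
        (n < i.natAbs ∧ oddExt l i = i) := by
      intro i
      by_cases h0 : i = 0
      · subst h0; exact Or.inr (Or.inl ⟨rfl, hzero⟩)
      by_cases h1 : i.natAbs ≤ n
      · have h2 := hnat i (by omega) h1
        have h3 := hb _ (hget (i.natAbs - 1) (by omega))
        left
        omega
      · exact Or.inr (Or.inr ⟨by omega, hout i (by omega)⟩)
    intro i j h
    rcases hrange i with hi | hi | hi <;> rcases hrange j with hj | hj | hj
    · rw [hnat i hi.1 hi.2.1, hnat j hj.1 hj.2.1] at h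
      have := hinjl _ _ (by omega) (by omega) h
      omega
    all_goals omega
  have hinj : Function.Injective (oddExt l) := by
    intro i j h
    have h1 := hnatAbs i j (by rw [h])
    rcases Int.natAbs_eq_natAbs_iff.1 h1 with h2 | h2
    · exact h2
    · -- an odd function taking equal values at `j` and `-j` vanishes at `j`
      rw [h2, hodd] at h
      have h3 := hnatAbs j 0 (by rw [hzero]; omega)
      omega
  have hsurj : Function.Surjective (oddExt l) := by
    intro y
    by_cases h0 : y = 0
    · exact ⟨0, by rw [hzero, h0]⟩
    by_cases h1 : y.natAbs ≤ n
    · obtain ⟨j, hj, hjy⟩ := hsurjl y.natAbs (by omega) h1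
      rcases Int.natAbs_eq_natAbs_iff.1 hjy with h | h
      · exact ⟨(j : ℤ) + 1, by rw [hpos j hj, h]⟩
      · exact ⟨-((j : ℤ) + 1), by rw [hodd, hpos j hj, h, neg_neg]⟩
    · exact ⟨y, hout y (by omega)⟩
  set w : Equiv.Perm ℤ := Equiv.ofBijective (oddExt l) ⟨hinj, hsurj⟩ with hw
  have hwapp : ∀ i, w i = oddExt l i := fun i => rfl
  refine ⟨w, ⟨⟨fun i => by rw [hwapp, hwapp, hodd], fun i hi => by
    rw [hwapp, hout i (by rw [Int.abs_eq_natAbs] at hi; omega)]⟩, ?_⟩, ?_⟩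
  · -- the letter of absolute value `1` is `1`, not `-1`
    obtain ⟨j, hj, hj1⟩ := hsurjl 1 le_rfl hn
    have h1 := hb _ (hget j hj)
    have h2 : w ((j : ℤ) + 1) = 1 := by rw [hwapp, hpos j hj]; omega
    rw [← h2, Equiv.symm_apply_apply]
    omega
  · refine List.ext_getElem (by simp [window, hlen]) fun i h1 h2 => ?_
    have hi : i < n := by omega
    simp only [window, List.getElem_ofFn, hwapp]
    rw [hpos i hi, List.getD_eq_getElem _ _ h2]

/-- Taking windows is a bijection from `X_n` onto the words, carrying `basc` to `gapCount`. -/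
lemma psiCQ_eq_insPoly {n : ℕ} (hn : 1 ≤ n) : PsiCQ n = insPoly Lll 0 alphC n := by
  have hnd := nodup_insWords alphC _ rank_of_mem_alphC (by
    intro m
    cases m with
    | zero => simp [alphC]
    | succ m => simp [alphC]; omega) n
  have hpsi : ∀ k, psiN n k
      = ((insWords alphC n).toFinset.filter fun l => gapCount Lll 0 0 l = k).card := by
    intro k
    rw [psiN, ← Set.ncard_coe_finset, 
      ← ((window_injOn n).mono fun w hw => hw.1).ncard_image]
    congr 1
    ext l
    simp only [Set.mem_image, Set.mem_ofPred_eq, Finset.coe_filter, List.mem_toFinset]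
    constructor
    · rintro ⟨w, ⟨hw, hk⟩, rfl⟩
      exact ⟨window_mem hw, by rw [gapCount_window hn w, hk]⟩
    · rintro ⟨hl, hk⟩
      obtain ⟨w, hw, rfl⟩ := exists_window_eq hn hl
      exact ⟨w, ⟨hw, by rw [← gapCount_window hn w, hk]⟩, rfl⟩
  rw [PsiCQ, insPoly, ← List.sum_toFinset _ hnd,
    Finset.sum_comp (fun k => (Polynomial.X : Polynomial ℚ) ^ k) (gapCount Lll 0 0),
    finsum_eq_sum_of_support_subset (s := (insWords alphC n).toFinset.image (gapCount Lll 0 0))]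
  · refine Finset.sum_congr rfl fun k _ => ?_
    rw [hpsi, nsmul_eq_mul]
  · intro k hk
    rw [Function.mem_support, hpsi] at hk
    have hk' : ((insWords alphC n).toFinset.filter fun l => gapCount Lll 0 0 l = k).Nonempty := by
      rw [Finset.nonempty_iff_ne_empty]
      intro h
      rw [h] at hk
      simp at hk
    obtain ⟨l, hl⟩ := hk'
    rw [Finset.mem_filter] at hl
    exact Finset.mem_coe.2 (Finset.mem_image.2 ⟨l, hl⟩)

/-! ### The differential equation in two variables -/

/-- The derivation `∂/∂t` of `ℚ[t]⟦x⟧`, acting on coefficients. -/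
noncomputable def derivT (f : PowerSeries (Polynomial ℚ)) : PowerSeries (Polynomial ℚ) :=
  PowerSeries.mk fun n => Polynomial.derivative (PowerSeries.coeff n f)

lemma derivT_mul (f g : PowerSeries (Polynomial ℚ)) :
    derivT (f * g) = derivT f * g + f * derivT g := by
  ext1 n
  simp only [derivT, PowerSeries.coeff_mk, PowerSeries.coeff_mul, map_add,
    Polynomial.derivative_sum, Polynomial.derivative_mul, Finset.sum_add_distrib]

lemma coeff_X_mul_derivative (f : PowerSeries (Polynomial ℚ)) (n : ℕ) :
    PowerSeries.coeff n (PowerSeries.X * PowerSeries.derivative (Polynomial ℚ) f)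
      = (n : Polynomial ℚ) * PowerSeries.coeff n f := by
  cases n with
  | zero => simp
  | succ n =>
    rw [PowerSeries.coeff_succ_X_mul, PowerSeries.coeff_derivative]
    push_cast
    ring

/-- The equation `f_x = A f + b t x f_x + b t (1 - t) f_t`, satisfied by exponential generating
functions of polynomials with `p_{n+1} = (A + b n t) p_n + b t (1 - t) p_n'`. -/
def IsEulerianPDE (A b : Polynomial ℚ) (f : PowerSeries (Polynomial ℚ)) : Prop :=
  PowerSeries.derivative (Polynomial ℚ) f
    = PowerSeries.C A * f
      + PowerSeries.C (b * Polynomial.X)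
          * (PowerSeries.X * PowerSeries.derivative (Polynomial ℚ) f)
      + PowerSeries.C (b * (Polynomial.X * (1 - Polynomial.X))) * derivT f

lemma isEulerianPDE_iff (A b : Polynomial ℚ) (f : PowerSeries (Polynomial ℚ)) :
    IsEulerianPDE A b f ↔ ∀ n : ℕ, PowerSeries.coeff (n + 1) f * ((n : Polynomial ℚ) + 1)
      = (A + b * (n : Polynomial ℚ) * Polynomial.X) * PowerSeries.coeff n f
        + b * (Polynomial.X * (1 - Polynomial.X))
            * Polynomial.derivative (PowerSeries.coeff n f) := by
  rw [IsEulerianPDE, PowerSeries.ext_iff]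
  refine forall_congr' fun n => ?_
  rw [map_add, map_add, PowerSeries.coeff_C_mul, PowerSeries.coeff_C_mul, PowerSeries.coeff_C_mul,
    coeff_X_mul_derivative, PowerSeries.coeff_derivative, derivT, PowerSeries.coeff_mk]
  constructor <;> intro h <;> rw [h] <;> ring

lemma IsEulerianPDE.unique {A b : Polynomial ℚ} {f g : PowerSeries (Polynomial ℚ)}
    (hf : IsEulerianPDE A b f) (hg : IsEulerianPDE A b g)
    (h0 : PowerSeries.coeff 0 f = PowerSeries.coeff 0 g) : f = g := by
  rw [isEulerianPDE_iff] at hf hg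
  ext1 n
  induction n with
  | zero => exact h0
  | succ n ih =>
    have hn : (n : Polynomial ℚ) + 1 ≠ 0 := by exact_mod_cast Nat.succ_ne_zero n
    apply mul_right_cancel₀ hn
    rw [hf, hg, ih]

lemma C_div_factorial_succ (a : ℚ) (n : ℕ) :
    Polynomial.C (a ^ (n + 1) / (n + 1).factorial) * ((n : Polynomial ℚ) + 1)
      = Polynomial.C (a ^ n / n.factorial) * Polynomial.C a := by
  have : ((n : Polynomial ℚ) + 1) = Polynomial.C ((n : ℚ) + 1) := by simp
  rw [this, ← Polynomial.C_mul, ← Polynomial.C_mul]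
  congr 1
  have h1 : (n.factorial : ℚ) ≠ 0 := by exact_mod_cast n.factorial_ne_zero
  have h2 : (n : ℚ) + 1 ≠ 0 := by positivity
  rw [Nat.factorial_succ]
  push_cast
  field_simp
  ring

/-- Exponential generating functions turn the recurrence into the differential equation; the
constant `a` rescales the variable `x`. -/
lemma isEulerianPDE_egf (A b : Polynomial ℚ) (a : ℚ) (p : ℕ → Polynomial ℚ)
    (hp : ∀ n : ℕ, Polynomial.C a * p (n + 1) = (A + b * (n : Polynomial ℚ) * Polynomial.X) * p n
      + b * (Polynomial.X * (1 - Polynomial.X)) * Polynomial.derivative (p n)) :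
    IsEulerianPDE A b
      (PowerSeries.mk fun n : ℕ => Polynomial.C (a ^ n / n.factorial) * p n) := by
  rw [isEulerianPDE_iff]
  intro n
  simp only [PowerSeries.coeff_mk, Polynomial.derivative_C_mul]
  have hc := C_div_factorial_succ a n
  linear_combination p (n + 1) * hc + Polynomial.C (a ^ n / n.factorial) * hp n

lemma derivative_expSeries :
    PowerSeries.derivative (Polynomial ℚ) (PowerSeries.mk fun m : ℕ =>
        Polynomial.C ((3 : ℚ) ^ m / m.factorial) * (Polynomial.X - 1) ^ m)
      = PowerSeries.C (3 * (Polynomial.X - 1)) * PowerSeries.mk fun m : ℕ =>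
        Polynomial.C ((3 : ℚ) ^ m / m.factorial) * (Polynomial.X - 1) ^ m := by
  ext1 n
  rw [PowerSeries.coeff_derivative, PowerSeries.coeff_C_mul, PowerSeries.coeff_mk,
    PowerSeries.coeff_mk]
  have hc := C_div_factorial_succ 3 n
  rw [map_ofNat] at hc
  linear_combination (Polynomial.X - 1) ^ (n + 1) * hc

lemma derivT_expSeries :
    derivT (PowerSeries.mk fun m : ℕ =>
        Polynomial.C ((3 : ℚ) ^ m / m.factorial) * (Polynomial.X - 1) ^ m)
      = PowerSeries.C 3 * (PowerSeries.X * PowerSeries.mk fun m : ℕ =>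
        Polynomial.C ((3 : ℚ) ^ m / m.factorial) * (Polynomial.X - 1) ^ m) := by
  ext1 n
  rw [derivT, PowerSeries.coeff_mk, PowerSeries.coeff_mk, PowerSeries.coeff_C_mul]
  cases n with
  | zero => simp
  | succ n =>
    rw [PowerSeries.coeff_succ_X_mul, PowerSeries.coeff_mk, Polynomial.derivative_C_mul,
      Polynomial.derivative_pow]
    have hc := C_div_factorial_succ 3 n
    rw [map_ofNat] at hc
    simp only [Polynomial.derivative_sub, Polynomial.derivative_X, Polynomial.derivative_one,
      sub_zero, mul_one, Nat.add_sub_cancel, map_natCast]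
    push_cast
    linear_combination (Polynomial.X - 1) ^ n * hc

/-- Multiplying by `q = exp(3x(t-1))` and squaring turns the equation of `E(2x)` into that of
the right-hand side. -/
lemma isEulerianPDE_mul_sq {q f : PowerSeries (Polynomial ℚ)}
    (hq : PowerSeries.derivative (Polynomial ℚ) q
      = PowerSeries.C (3 * (Polynomial.X - 1)) * q)
    (hqt : derivT q = PowerSeries.C 3 * (PowerSeries.X * q))
    (hf : IsEulerianPDE 2 2 f) :
    IsEulerianPDE (1 + 3 * Polynomial.X) 2 (q * f ^ 2) := by
  unfold IsEulerianPDE at hf ⊢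
  simp only [pow_two, derivT_mul, Derivation.leibniz, smul_eq_mul, hq, hqt]
  simp only [map_mul, map_add, map_sub, map_one, map_ofNat] at hf ⊢
  linear_combination 2 * q * f * hf

/-- Theorem C. In `(ℚ[t])⟦x⟧`:
`Σ_{n≥0} Ψ_{C_{n+1}}(t) xⁿ/n! = exp(3x(t-1)) · (Σ_{m≥0} E_m^A(t) 2^m x^m/m!)²`. -/
theorem PsiC_generating_function :
    (PowerSeries.mk fun n : ℕ => Polynomial.C ((n.factorial : ℚ)⁻¹) * PsiCQ (n + 1))
      = (PowerSeries.mk fun m : ℕ =>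
          Polynomial.C ((3 : ℚ) ^ m / m.factorial) * (Polynomial.X - 1) ^ m)
        * (PowerSeries.mk fun m : ℕ =>
            Polynomial.C ((2 : ℚ) ^ m / m.factorial) * EulerianA m) ^ 2 := by
  have hE0 : EulerianA 0 = 1 := by simp [EulerianA, desA]
  have hE : IsEulerianPDE 2 2 (PowerSeries.mk fun m : ℕ =>
      Polynomial.C ((2 : ℚ) ^ m / m.factorial) * EulerianA m) := by
    refine isEulerianPDE_egf _ _ _ _ fun n => ?_
    rw [eulerianA_eq_insPoly, eulerianA_eq_insPoly, insPoly_alphA_succ, map_ofNat]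
    ring
  have hG : IsEulerianPDE (1 + 3 * Polynomial.X) 2 (PowerSeries.mk fun n : ℕ =>
      Polynomial.C ((1 : ℚ) ^ n / n.factorial) * PsiCQ (n + 1)) := by
    refine isEulerianPDE_egf _ _ _ (fun n => PsiCQ (n + 1)) fun n => ?_
    rw [psiCQ_eq_insPoly (by omega), psiCQ_eq_insPoly (by omega), insPoly_alphC_succ, map_one]
    ring
  simp only [one_pow, one_div] at hG
  refine hG.unique (isEulerianPDE_mul_sq derivative_expSeries derivT_expSeries hE) ?_
  have h1 : PsiCQ 1 = 1 := by
    rw [psiCQ_eq_insPoly le_rfl]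
    have : ¬ Lll 0 1 ∧ ¬ Lll 1 0 := ⟨not_Lll_of_le (by omega), not_Lll_of_le (by omega)⟩
    simp [insPoly, insWords, alphC, List.permutations'Aux, gapCount, this]
  simp [pow_two, hE0, h1]
end
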